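/- arXiv:2005.08544 — 2 statements merged into one kernel-verified Lean document; each statement's English description precedes it below -/
import Mathlib

section
/- Let n ≥ 1 and let a : ℤ → ℂ be any function (only the values a_m for |m| ≤ n−1 matter). Let M be the n×n complex matrix with entries M_{jl} = (|j−l|/n)·a_{j−l} and let N be the n×n matrix with entries N_{jl} = (j−l)·a_{j−l}, for 0 ≤ j,l ≤ n−1. Then, with ‖·‖ the operator norm on ℓ², ‖M‖ ≤ γ′_n · ‖N‖, where γ′_n = (2/n)·(1 + (1 + log n)/π). In particular γ′_n → 0 as n → ∞. -/
open Filter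

/-- The operator norm of an `n×n` complex matrix acting on `ℓ²`. -/
noncomputable def l2OpNorm {n : ℕ} (M : Matrix (Fin n) (Fin n) ℂ) : ℝ :=
  ‖Matrix.toEuclideanCLM (𝕜 := ℂ) M‖

/-!
The Schur multiplier taking `(j - l) b_{jl}` to `|j - l| b_{jl}` is the matrix `sign (j - l)`. For
`|d| < n`, the function `sign d` extends to `ℤ` with `f (d + n) = -f d`, so it is a combination of
the characters `d ↦ ζ ^ (-d)` over the `n`-th roots `ζ` of `-1`. The coefficient of
`ζ = exp (i (2p + 1) π / n)` is `n⁻¹ ∑_{0 < r < n} ζ ^ r`, of modulus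
`n⁻¹ |cot ((2p + 1) π / (2n))|`. Each character acts as conjugation by a unitary diagonal matrix, so
the multiplier norm is at most the sum of these moduli. By `|cot x| ≤ 1 / x + 1 / (π - x)` on
`(0, π)` that sum is at most `(4 / π) ∑_{p < n} 1 / (2p + 1) ≤ (2 / π) (3 + log n)`, which is below
`2 (1 + (1 + log n) / π)` because `3 ≤ π + 1`.
-/

section Hadamard

open scoped Matrix Matrix.Norms.L2Operator

variable {m k ι 𝕜 : Type*} [Fintype m] [Fintype k] [DecidableEq k] [RCLike 𝕜]

lemma vecMulVec_hadamard_eq_diagonal_mul_mul_diagonal [DecidableEq m] (v : m → 𝕜)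
    (u : k → 𝕜) (A : Matrix m k 𝕜) :
    Matrix.vecMulVec v u ⊙ A = Matrix.diagonal v * A * Matrix.diagonal u := by
  ext i j
  rw [Matrix.mul_diagonal, Matrix.diagonal_mul, Matrix.hadamard_apply, Matrix.vecMulVec_apply]
  ring

lemma l2_opNorm_vecMulVec_hadamard_le (v : m → 𝕜) (u : k → 𝕜) (A : Matrix m k 𝕜) :
    ‖Matrix.vecMulVec v u ⊙ A‖ ≤ ‖v‖ * ‖A‖ * ‖u‖ := by
  classical
  rw [vecMulVec_hadamard_eq_diagonal_mul_mul_diagonal, ← Matrix.l2_opNorm_diagonal v,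
    ← Matrix.l2_opNorm_diagonal u]
  exact (Matrix.l2_opNorm_mul _ _).trans
    (mul_le_mul_of_nonneg_right (Matrix.l2_opNorm_mul _ _) (norm_nonneg _))

lemma l2_opNorm_sum_smul_vecMulVec_hadamard_le (s : Finset ι) (c : ι → 𝕜) {v : ι → m → 𝕜}
    {u : ι → k → 𝕜} (hv : ∀ p ∈ s, ‖v p‖ ≤ 1) (hu : ∀ p ∈ s, ‖u p‖ ≤ 1) (A : Matrix m k 𝕜) :
    ‖(∑ p ∈ s, c p • Matrix.vecMulVec (v p) (u p)) ⊙ A‖ ≤ (∑ p ∈ s, ‖c p‖) * ‖A‖ := by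
  have sum_hadamard : (∑ p ∈ s, c p • Matrix.vecMulVec (v p) (u p)) ⊙ A
      = ∑ p ∈ s, c p • (Matrix.vecMulVec (v p) (u p) ⊙ A) := by
    ext i j
    simp only [Matrix.hadamard_apply, Matrix.sum_apply, Matrix.smul_apply, smul_eq_mul,
      Finset.sum_mul, mul_assoc]
  rw [sum_hadamard, Finset.sum_mul]
  refine norm_sum_le_of_le s fun p hp => ?_
  calc ‖c p • (Matrix.vecMulVec (v p) (u p) ⊙ A)‖
      ≤ ‖c p‖ * (‖v p‖ * ‖A‖ * ‖u p‖) := by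
        rw [norm_smul]
        gcongr
        exact l2_opNorm_vecMulVec_hadamard_le _ _ _
    _ ≤ ‖c p‖ * (1 * ‖A‖ * 1) := by
        gcongr
        exacts [hv p hp, hu p hp]
    _ = ‖c p‖ * ‖A‖ := by rw [one_mul, mul_one]

end Hadamard

lemma geom_sum_Ico_one_mul_sub_one {R : Type*} [Ring R] {n : ℕ} (hn : 1 ≤ n) {z : R}
    (hz : z ^ n = -1) : (∑ r ∈ Finset.Ico 1 n, z ^ r) * (z - 1) = -(z + 1) := by
  rw [geom_sum_Ico_mul z hn, hz, pow_one, neg_add_rev, sub_eq_add_neg]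

section OddPowers

variable {K : Type*} [Field K] {n : ℕ} {w : K}

lemma odd_pow_pow_eq_neg_one (hw : IsPrimitiveRoot w (2 * n)) (hn : n ≠ 0) (p : ℕ) :
    (w ^ (2 * p + 1)) ^ n = -1 := by
  have hwn : w ^ n = -1 :=
    (hw.pow (by positivity) (mul_comm 2 n)).eq_neg_one_of_two_right
  rw [pow_right_comm, hwn, Odd.neg_one_pow ⟨p, rfl⟩]

lemma sum_odd_pow_zpow_eq_zero (hw : IsPrimitiveRoot w (2 * n)) {s : ℤ} (hs : ¬ (n : ℤ) ∣ s) :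
    ∑ p ∈ Finset.range n, (w ^ (2 * p + 1)) ^ s = 0 := by
  have ratio_ne_one : (w ^ s) ^ 2 ≠ 1 := by
    rw [← zpow_natCast, ← zpow_mul, Ne, hw.zpow_eq_one_iff_dvd]
    push_cast
    rwa [mul_comm s, mul_dvd_mul_iff_left two_ne_zero]
  have ratio_pow : ((w ^ s) ^ 2) ^ n = 1 := by
    rw [← pow_mul, ← zpow_natCast, zpow_comm, hw.zpow_eq_one, one_zpow]
  calc ∑ p ∈ Finset.range n, (w ^ (2 * p + 1)) ^ s
      = ∑ p ∈ Finset.range n, ((w ^ s) ^ 2) ^ p * w ^ s := by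
        refine Finset.sum_congr rfl fun p _ => ?_
        rw [← pow_mul, ← pow_succ, ← zpow_natCast, ← zpow_natCast, zpow_comm]
    _ = 0 := by
        rw [← Finset.sum_mul, geom_sum_eq ratio_ne_one, ratio_pow, sub_self, zero_div, zero_mul]

lemma sum_geom_sum_mul_odd_pow_zpow (hw : IsPrimitiveRoot w (2 * n)) (hn : n ≠ 0) (d : ℤ) :
    ∑ p ∈ Finset.range n, (∑ r ∈ Finset.Ico 1 n, (w ^ (2 * p + 1)) ^ r) * (w ^ (2 * p + 1)) ^ (-d)
      = ∑ r ∈ Finset.Ico 1 n, ∑ p ∈ Finset.range n, (w ^ (2 * p + 1)) ^ ((r : ℤ) - d) := by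
  have hw0 : w ≠ 0 := hw.ne_zero (by positivity)
  rw [Finset.sum_comm]
  refine Finset.sum_congr rfl fun p _ => ?_
  rw [Finset.sum_mul]
  refine Finset.sum_congr rfl fun r _ => ?_
  rw [sub_eq_add_neg, zpow_add₀ (pow_ne_zero _ hw0), zpow_natCast]

lemma sum_geom_sum_mul_odd_pow_zpow_of_pos (hw : IsPrimitiveRoot w (2 * n)) {d : ℤ} (hd : 0 < d)
    (hdn : d < n) :
    ∑ p ∈ Finset.range n, (∑ r ∈ Finset.Ico 1 n, (w ^ (2 * p + 1)) ^ r) * (w ^ (2 * p + 1)) ^ (-d)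
      = n := by
  lift d to ℕ using hd.le
  rw [sum_geom_sum_mul_odd_pow_zpow hw (by omega),
    Finset.sum_eq_single_of_mem d (Finset.mem_Ico.2 (by omega))]
  · simp only [sub_self, zpow_zero, Finset.sum_const, Finset.card_range, nsmul_eq_mul, mul_one]
  · intro r hr hrd
    rw [Finset.mem_Ico] at hr
    refine sum_odd_pow_zpow_eq_zero hw fun hdvd => hrd ?_
    have := Int.eq_zero_of_abs_lt_dvd hdvd (abs_lt.2 ⟨by omega, by omega⟩)
    omega

-- Every `w ^ (2 * p + 1)` is an `n`-th root of `-1`, so replacing a negative `d` by `d + n` changes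
-- the sign of both sides.
lemma sum_geom_sum_mul_odd_pow_zpow_eq_sign (hw : IsPrimitiveRoot w (2 * n)) {d : ℤ}
    (hd : |d| < n) :
    ∑ p ∈ Finset.range n, (∑ r ∈ Finset.Ico 1 n, (w ^ (2 * p + 1)) ^ r) * (w ^ (2 * p + 1)) ^ (-d)
      = n * (d.sign : K) := by
  have hn : n ≠ 0 := by have := abs_nonneg d; omega
  obtain ⟨hdl, hdr⟩ := abs_lt.1 hd
  rcases lt_trichotomy d 0 with hneg | rfl | hpos
  · have shift (p : ℕ) : (w ^ (2 * p + 1)) ^ (-d) = -(w ^ (2 * p + 1)) ^ (-(d + n)) := by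
      have hw0 : w ^ (2 * p + 1) ≠ 0 := pow_ne_zero _ (hw.ne_zero (by positivity))
      rw [show -d = -(d + n) + (n : ℤ) by ring, zpow_add₀ hw0, zpow_natCast,
        odd_pow_pow_eq_neg_one hw hn, mul_neg_one]
    simp only [shift, mul_neg, Finset.sum_neg_distrib]
    rw [sum_geom_sum_mul_odd_pow_zpow_of_pos hw (by omega) (by omega),
      Int.sign_eq_neg_one_of_neg hneg, Int.cast_neg, Int.cast_one, mul_neg_one]
  · rw [sum_geom_sum_mul_odd_pow_zpow hw hn, Int.sign_zero, Int.cast_zero, mul_zero]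
    refine Finset.sum_eq_zero fun r hr => sum_odd_pow_zpow_eq_zero hw fun hdvd => ?_
    rw [Finset.mem_Ico] at hr
    have := Int.eq_zero_of_abs_lt_dvd hdvd (abs_lt.2 ⟨by omega, by omega⟩)
    omega
  · rw [sum_geom_sum_mul_odd_pow_zpow_of_pos hw hpos hdr, Int.sign_eq_one_of_pos hpos,
      Int.cast_one, mul_one]

end OddPowers

section Cotangent

lemma norm_exp_I_mul_ofReal_add_one (x : ℝ) :
    ‖Complex.exp (Complex.I * x) + 1‖ = ‖2 * Real.cos (x / 2)‖ := by
  have h := Complex.norm_exp_I_mul_ofReal_sub_one (x + Real.pi)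
  rwa [Complex.ofReal_add, mul_add, mul_comm Complex.I (Real.pi : ℂ), Complex.exp_add,
    Complex.exp_pi_mul_I, mul_neg_one, ← neg_add', norm_neg, add_div, Real.sin_add_pi_div_two] at h

lemma norm_geom_sum_exp_eq_abs_cot {n : ℕ} {x : ℝ}
    (hx : Complex.exp (Complex.I * x) ^ n = -1) :
    ‖∑ r ∈ Finset.Ico 1 n, Complex.exp (Complex.I * x) ^ r‖ = |Real.cot (x / 2)| := by
  have hn : 1 ≤ n := Nat.one_le_iff_ne_zero.2 (by rintro rfl; norm_num at hx)
  have exp_ne_one : Complex.exp (Complex.I * x) - 1 ≠ 0 := by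
    intro h
    rw [sub_eq_zero.1 h, one_pow] at hx
    norm_num at hx
  rw [eq_div_of_mul_eq exp_ne_one (geom_sum_Ico_one_mul_sub_one hn hx), norm_div, norm_neg,
    norm_exp_I_mul_ofReal_add_one, Complex.norm_exp_I_mul_ofReal_sub_one, ← norm_div,
    mul_div_mul_left _ _ two_ne_zero, ← Real.cot_eq_cos_div_sin, Real.norm_eq_abs]

lemma cot_le_inv {x : ℝ} (hx : 0 < x) (hxpi : x < Real.pi) : Real.cot x ≤ x⁻¹ := by
  rcases lt_or_ge x (Real.pi / 2) with h | h
  · rw [← Real.tan_inv_eq_cot]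
    exact inv_anti₀ hx (Real.lt_tan hx h).le
  · have cos_nonpos : Real.cos x ≤ 0 := Real.cos_nonpos_of_pi_div_two_le_of_le h (by linarith)
    have sin_pos : 0 < Real.sin x := Real.sin_pos_of_pos_of_lt_pi hx hxpi
    rw [Real.cot_eq_cos_div_sin]
    exact (div_nonpos_of_nonpos_of_nonneg cos_nonpos sin_pos.le).trans (inv_pos.2 hx).le

lemma abs_cot_le_inv_add_inv {x : ℝ} (hx : 0 < x) (hxpi : x < Real.pi) :
    |Real.cot x| ≤ x⁻¹ + (Real.pi - x)⁻¹ := by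
  have cot_reflect : Real.cot (Real.pi - x) = -Real.cot x := by
    simp only [Real.cot_eq_cos_div_sin, Real.cos_pi_sub, Real.sin_pi_sub, neg_div]
  have cot_le := cot_le_inv hx hxpi
  have neg_cot_le := cot_le_inv (sub_pos.2 hxpi) (sub_lt_self _ hx)
  have inv_pos_left := inv_pos.2 hx
  have inv_pos_right := inv_pos.2 (sub_pos.2 hxpi)
  rw [cot_reflect] at neg_cot_le
  exact abs_le'.2 ⟨by linarith, by linarith⟩

lemma sum_inv_odd_le (n : ℕ) :
    ∑ p ∈ Finset.range n, (2 * (p : ℝ) + 1)⁻¹ ≤ (3 + Real.log n) / 2 := by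
  calc ∑ p ∈ Finset.range n, (2 * (p : ℝ) + 1)⁻¹
      ≤ ∑ p ∈ Finset.range (n + 1), (2 * (p : ℝ) + 1)⁻¹ :=
        Finset.sum_le_sum_of_subset_of_nonneg (Finset.range_mono n.le_succ)
          fun _ _ _ => by positivity
    _ = ∑ p ∈ Finset.range n, (2 * ((p + 1 : ℕ) : ℝ) + 1)⁻¹ + 1 := by
        rw [Finset.sum_range_succ', Nat.cast_zero, mul_zero, zero_add, inv_one]
    _ ≤ ∑ p ∈ Finset.range n, (2 : ℝ)⁻¹ * ((p + 1 : ℕ) : ℝ)⁻¹ + 1 := by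
        gcongr with p
        rw [← mul_inv]
        gcongr
        exact le_add_of_nonneg_right zero_le_one
    _ = 2⁻¹ * (harmonic n : ℝ) + 1 := by
        rw [← Finset.mul_sum, harmonic]
        push_cast
        rfl
    _ ≤ 2⁻¹ * (1 + Real.log n) + 1 := by
        gcongr
        exact harmonic_le_one_add_log n
    _ = (3 + Real.log n) / 2 := by ring

lemma sum_abs_cot_le (n : ℕ) :
    ∑ p ∈ Finset.range n, |Real.cot ((2 * p + 1) * Real.pi / (2 * n))|
      ≤ n * (2 * (3 + Real.log n) / Real.pi) := by
  set x : ℕ → ℝ := fun p => (2 * p + 1) * Real.pi / (2 * n) with hx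
  have reflect {p : ℕ} (hp : p < n) : Real.pi - x p = x (n - 1 - p) := by
    have : (n : ℝ) ≠ 0 := by exact_mod_cast (by omega : n ≠ 0)
    simp only [hx]
    rw [Nat.sub_sub, Nat.cast_sub (by omega)]
    push_cast
    field_simp
    ring
  have x_pos {p : ℕ} (hp : p < n) : 0 < x p := by
    have : (0 : ℝ) < n := by exact_mod_cast (by omega : 0 < n)
    positivity
  calc ∑ p ∈ Finset.range n, |Real.cot (x p)|
      ≤ ∑ p ∈ Finset.range n, ((x p)⁻¹ + (x (n - 1 - p))⁻¹) := by
        refine Finset.sum_le_sum fun p hp => ?_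
        rw [Finset.mem_range] at hp
        rw [← reflect hp]
        refine abs_cot_le_inv_add_inv (x_pos hp) (sub_pos.1 ?_)
        rw [reflect hp]
        exact x_pos (by omega)
    _ = 2 * ∑ p ∈ Finset.range n, (x p)⁻¹ := by
        rw [Finset.sum_add_distrib, Finset.sum_range_reflect (fun p => (x p)⁻¹), two_mul]
    _ = n * (4 / Real.pi) * ∑ p ∈ Finset.range n, (2 * (p : ℝ) + 1)⁻¹ := by
        rw [Finset.mul_sum, Finset.mul_sum]
        refine Finset.sum_congr rfl fun p _ => ?_
        simp only [hx]
        field_simp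
        ring
    _ ≤ n * (4 / Real.pi) * ((3 + Real.log n) / 2) := by
        gcongr
        exact sum_inv_odd_le n
    _ = n * (2 * (3 + Real.log n) / Real.pi) := by ring

end Cotangent

lemma tendsto_two_div_mul_one_add_log :
    Tendsto (fun m : ℕ => (2 / (m : ℝ)) * (1 + (1 + Real.log m) / Real.pi)) atTop (nhds 0) := by
  have inv_tendsto : Tendsto (fun m : ℕ => (m : ℝ)⁻¹) atTop (nhds 0) :=
    tendsto_inv_atTop_nhds_zero_nat
  have log_tendsto : Tendsto (fun m : ℕ => Real.log m / (m : ℝ)) atTop (nhds 0) :=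
    Real.isLittleO_log_id_atTop.tendsto_div_nhds_zero.comp tendsto_natCast_atTop_atTop
  have sum_tendsto := (inv_tendsto.const_mul (2 * (1 + 1 / Real.pi))).add
    (log_tendsto.const_mul (2 / Real.pi))
  rw [mul_zero, mul_zero, add_zero] at sum_tendsto
  exact sum_tendsto.congr fun m => by ring

section SignMatrix

open scoped Matrix Matrix.Norms.L2Operator

/-- The matrix `(sign (j - l))`, that is `T_n - T_nᵀ` for the lower triangular all-ones matrix
`T_n`; it is the Schur multiplier that turns `j - l` into `|j - l|`. -/
def signMatrix (n : ℕ) : Matrix (Fin n) (Fin n) ℂ :=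
  Matrix.of fun j l => (((((j : ℕ) : ℤ) - ((l : ℕ) : ℤ)).sign : ℤ) : ℂ)

lemma signMatrix_eq_sum_smul_vecMulVec {n : ℕ} {w : ℂ} (hw : IsPrimitiveRoot w (2 * n)) :
    signMatrix n = ∑ p ∈ Finset.range n,
      ((n : ℂ)⁻¹ * ∑ r ∈ Finset.Ico 1 n, (w ^ (2 * p + 1)) ^ r) •
        Matrix.vecMulVec (fun j : Fin n => (w ^ (2 * p + 1)) ^ (-((j : ℕ) : ℤ)))
          (fun l : Fin n => (w ^ (2 * p + 1)) ^ (l : ℕ)) := by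
  ext j l
  have hn : n ≠ 0 := by have := j.isLt; omega
  have hw0 : w ≠ 0 := hw.ne_zero (by positivity)
  have hd : |((j : ℕ) : ℤ) - ((l : ℕ) : ℤ)| < n := abs_lt.2 ⟨by omega, by omega⟩
  rw [signMatrix, Matrix.of_apply, ← inv_mul_cancel_left₀ (Nat.cast_ne_zero.2 hn) (Int.cast _),
    ← sum_geom_sum_mul_odd_pow_zpow_eq_sign hw hd, Finset.mul_sum, Matrix.sum_apply]
  refine Finset.sum_congr rfl fun p _ => ?_
  rw [Matrix.smul_apply, Matrix.vecMulVec_apply, smul_eq_mul, neg_sub, sub_eq_neg_add,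
    zpow_add₀ (pow_ne_zero _ hw0), zpow_natCast, mul_assoc]

lemma l2_opNorm_signMatrix_hadamard_le {n : ℕ} (hn : 1 ≤ n) (A : Matrix (Fin n) (Fin n) ℂ) :
    ‖signMatrix n ⊙ A‖ ≤ 2 * (3 + Real.log n) / Real.pi * ‖A‖ := by
  set w : ℂ := Complex.exp (2 * Real.pi * Complex.I / (2 * n : ℕ)) with hw_def
  have hw : IsPrimitiveRoot w (2 * n) := Complex.isPrimitiveRoot_exp _ (by positivity)
  have odd_pow_eq (p : ℕ) :
      w ^ (2 * p + 1) = Complex.exp (Complex.I * ((2 * p + 1) * Real.pi / n : ℝ)) := by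
    rw [hw_def, ← Complex.exp_nat_mul]
    push_cast
    congr 1
    field_simp
  have norm_odd_pow (p : ℕ) : ‖w ^ (2 * p + 1)‖ = 1 := by
    rw [odd_pow_eq, Complex.norm_exp_I_mul_ofReal]
  have norm_coeff (p : ℕ) : ‖(n : ℂ)⁻¹ * ∑ r ∈ Finset.Ico 1 n, (w ^ (2 * p + 1)) ^ r‖
      = (n : ℝ)⁻¹ * |Real.cot ((2 * p + 1) * Real.pi / (2 * n))| := by
    have root := odd_pow_pow_eq_neg_one hw (by omega) p
    rw [odd_pow_eq] at root ⊢
    rw [norm_mul, norm_inv, Complex.norm_natCast, norm_geom_sum_exp_eq_abs_cot root, div_div,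
      mul_comm (n : ℝ) 2]
  rw [signMatrix_eq_sum_smul_vecMulVec hw]
  refine (l2_opNorm_sum_smul_vecMulVec_hadamard_le _ _ (fun p _ => ?_) (fun p _ => ?_) A).trans ?_
  · refine (pi_norm_le_iff_of_nonneg zero_le_one).2 fun j => ?_
    rw [norm_zpow, norm_odd_pow, one_zpow]
  · refine (pi_norm_le_iff_of_nonneg zero_le_one).2 fun l => ?_
    rw [norm_pow, norm_odd_pow, one_pow]
  · gcongr
    simp only [norm_coeff]
    rw [← Finset.mul_sum, inv_mul_le_iff₀ (by positivity)]
    exact sum_abs_cot_le n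

lemma of_abs_sub_div_mul_eq_smul_signMatrix_hadamard {n : ℕ} (A : Matrix (Fin n) (Fin n) ℂ) :
    (Matrix.of fun j l : Fin n =>
        ((|(((j : ℕ) : ℤ) - ((l : ℕ) : ℤ))| : ℤ) : ℂ) / (n : ℂ) * A j l)
      = (n : ℂ)⁻¹ • (signMatrix n ⊙ Matrix.of fun j l : Fin n =>
          (((((j : ℕ) : ℤ) - ((l : ℕ) : ℤ)) : ℤ) : ℂ) * A j l) := by
  ext j l
  rw [Matrix.smul_apply, Matrix.hadamard_apply, signMatrix, Matrix.of_apply, Matrix.of_apply,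
    Matrix.of_apply, ← Int.sign_mul_self_eq_abs, Int.cast_mul, smul_eq_mul]
  ring

lemma l2OpNorm_eq_norm {n : ℕ} (A : Matrix (Fin n) (Fin n) ℂ) : l2OpNorm A = ‖A‖ := rfl

theorem schur_estimate_general (n : ℕ) (hn : 1 ≤ n) (A : Matrix (Fin n) (Fin n) ℂ) :
    (l2OpNorm (Matrix.of fun j l : Fin n =>
        ((|(((j : ℕ) : ℤ) - ((l : ℕ) : ℤ))| : ℤ) : ℂ) / (n : ℂ) * A j l)
      ≤ (2 / (n : ℝ)) * (1 + (1 + Real.log n) / Real.pi)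
        * l2OpNorm (Matrix.of fun j l : Fin n =>
            (((((j : ℕ) : ℤ) - ((l : ℕ) : ℤ)) : ℤ) : ℂ) * A j l)) ∧
    Tendsto (fun m : ℕ => (2 / (m : ℝ)) * (1 + (1 + Real.log m) / Real.pi))
      atTop (nhds 0) := by
  refine ⟨?_, tendsto_two_div_mul_one_add_log⟩
  set N : Matrix (Fin n) (Fin n) ℂ :=
    Matrix.of fun j l => (((((j : ℕ) : ℤ) - ((l : ℕ) : ℤ)) : ℤ) : ℂ) * A j l with hN
  have constant_le : 2 * (3 + Real.log n) / Real.pi ≤ 2 * (1 + (1 + Real.log n) / Real.pi) := by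
    rw [mul_div_assoc, one_add_div Real.pi_ne_zero]
    gcongr <;> linarith [Real.pi_gt_three]
  rw [of_abs_sub_div_mul_eq_smul_signMatrix_hadamard, ← hN, l2OpNorm_eq_norm, l2OpNorm_eq_norm,
    norm_smul, norm_inv, Complex.norm_natCast]
  calc (n : ℝ)⁻¹ * ‖signMatrix n ⊙ N‖
      ≤ (n : ℝ)⁻¹ * (2 * (1 + (1 + Real.log n) / Real.pi) * ‖N‖) := by
        gcongr
        exact (l2_opNorm_signMatrix_hadamard_le hn N).trans
          (mul_le_mul_of_nonneg_right constant_le (norm_nonneg N))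
    _ = 2 / (n : ℝ) * (1 + (1 + Real.log n) / Real.pi) * ‖N‖ := by ring

end SignMatrix

/-- Lemma 3.5: with `M_{jl} = (|j−l|/n)·a_{j−l}` and `N_{jl} = (j−l)·a_{j−l}` one has
`‖M‖ ≤ γ′_n ‖N‖` for `γ′_n = (2/n)(1 + (1 + log n)/π)`; moreover `γ′_n → 0`. -/
theorem schur_estimate (n : ℕ) (hn : 1 ≤ n) (a : ℤ → ℂ) :
    (l2OpNorm (Matrix.of fun j l : Fin n =>
        ((|(((j : ℕ) : ℤ) - ((l : ℕ) : ℤ))| : ℤ) : ℂ) / (n : ℂ)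
          * a (((j : ℕ) : ℤ) - ((l : ℕ) : ℤ)))
      ≤ (2 / (n : ℝ)) * (1 + (1 + Real.log n) / Real.pi)
        * l2OpNorm (Matrix.of fun j l : Fin n =>
            (((((j : ℕ) : ℤ) - ((l : ℕ) : ℤ)) : ℤ) : ℂ)
              * a (((j : ℕ) : ℤ) - ((l : ℕ) : ℤ)))) ∧
    Tendsto (fun m : ℕ => (2 / (m : ℝ)) * (1 + (1 + Real.log m) / Real.pi))
      atTop (nhds 0) :=
  schur_estimate_general n hn (Matrix.of fun j l => a (((j : ℕ) : ℤ) - ((l : ℕ) : ℤ)))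
end

section
/- For each n ≥ 1 let 𝒯_n ⊆ M_n(ℂ) be the complex vector space of n×n Toeplitz matrices (matrices T with T_{jl} depending only on j−l), and let S(𝒯_n) be the set of linear functionals φ : 𝒯_n → ℂ with φ(I) = 1 and φ(T) ≥ 0 for every positive semidefinite T ∈ 𝒯_n, equipped with the distance d_n(φ, ψ) = sup { |φ(T) − ψ(T)| : T ∈ 𝒯_n, ‖δ_n(T)‖ ≤ 1 }, where δ_n(T) is the matrix with entries (j−l)T_{jl} and ‖·‖ is the ℓ² operator norm. Let P(S¹) be the set of Borel probability measures on the circle AddCircle (2π), equipped with the Kantorovich distance d(μ, ν) = sup { |∫ f dμ − ∫ f dν| : f : AddCircle (2π) → ℝ is 1-Lipschitz for the arc-length metric }. Then each (S(𝒯_n), d_n) is a nonempty compact metric space, (P(S¹), d) is a nonempty compact metric space, and (S(𝒯_n), d_n) converges to (P(S¹), d) in Gromov–Hausdorff distance as n → ∞. -/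
open MeasureTheory Filter
open scoped ComplexOrder

instance : Fact (0 < 2 * Real.pi) := ⟨by positivity⟩

/-- The space `𝒯_n ⊆ M_n(ℂ)` of `n×n` Toeplitz matrices: `T_{jl}` depends only on `j − l`. -/
noncomputable def toeplitzSubmodule (n : ℕ) : Submodule ℂ (Matrix (Fin n) (Fin n) ℂ) where
  carrier := {T | ∀ j l j' l' : Fin n,
    ((j : ℕ) : ℤ) - ((l : ℕ) : ℤ) = ((j' : ℕ) : ℤ) - ((l' : ℕ) : ℤ) → T j l = T j' l'}
  add_mem' := by
    intro a b ha hb j l j' l' h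
    simp only [Matrix.add_apply, ha j l j' l' h, hb j l j' l' h]
  zero_mem' := by intro j l j' l' h; rfl
  smul_mem' := by
    intro c a ha j l j' l' h
    simp only [Matrix.smul_apply, ha j l j' l' h]

lemma one_mem_toeplitzSubmodule (n : ℕ) :
    (1 : Matrix (Fin n) (Fin n) ℂ) ∈ toeplitzSubmodule n := by
  intro j l j' l' h
  by_cases hjl : j = l
  · have : j' = l' := by
      apply Fin.ext
      have h1 : (j : ℕ) = (l : ℕ) := by rw [hjl]
      omega
    simp [Matrix.one_apply, hjl, this]
  · have : j' ≠ l' := by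
      intro hc
      apply hjl
      apply Fin.ext
      have h1 : (j' : ℕ) = (l' : ℕ) := by rw [hc]
      omega
    simp [Matrix.one_apply, hjl, this]

/-- The identity matrix, as an element of the Toeplitz operator system. -/
noncomputable def toeplitzOne (n : ℕ) : toeplitzSubmodule n :=
  ⟨1, one_mem_toeplitzSubmodule n⟩

/-- A state on the Toeplitz operator system `𝒯_n`: a linear functional `φ` with `φ(I) = 1`
which is nonnegative on positive semidefinite Toeplitz matrices. -/
noncomputable def ToeplitzState (n : ℕ) : Type :=
  {φ : toeplitzSubmodule n →ₗ[ℂ] ℂ //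
    φ (toeplitzOne n) = 1 ∧
    ∀ T : toeplitzSubmodule n, (T : Matrix (Fin n) (Fin n) ℂ).PosSemidef → 0 ≤ φ T}

/-- The matrix `δ_n(T)` with entries `(j−l)·T_{jl}`. -/
noncomputable def deltaMat (n : ℕ) (T : Matrix (Fin n) (Fin n) ℂ) :
    Matrix (Fin n) (Fin n) ℂ :=
  Matrix.of fun j l => (((((j : ℕ) : ℤ) - ((l : ℕ) : ℤ)) : ℤ) : ℂ) * T j l

/-- Connes' distance on the state space of the Toeplitz operator system:
`d_n(φ, ψ) = sup { |φ(T) − ψ(T)| : T ∈ 𝒯_n, ‖δ_n(T)‖ ≤ 1 }`. -/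
noncomputable def toeplitzStateDist (n : ℕ) (φ ψ : ToeplitzState n) : ℝ :=
  sSup {r : ℝ | ∃ T : toeplitzSubmodule n,
    l2OpNorm (deltaMat n (T : Matrix (Fin n) (Fin n) ℂ)) ≤ 1 ∧ r = ‖φ.1 T - ψ.1 T‖}

/-- The Kantorovich distance on Borel probability measures on the circle:
`d(μ, ν) = sup { |∫ f dμ − ∫ f dν| : f 1-Lipschitz }`. -/
noncomputable def kantorovichDist
    (μ ν : ProbabilityMeasure (AddCircle (2 * Real.pi))) : ℝ :=
  sSup {r : ℝ | ∃ f : AddCircle (2 * Real.pi) → ℝ, LipschitzWith 1 f ∧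
    r = |(∫ x, f x ∂(μ : Measure (AddCircle (2 * Real.pi))))
        - ∫ x, f x ∂(ν : Measure (AddCircle (2 * Real.pi)))|}

/-! Compression `f ↦ P_n f P_n` and the Fejér symbol `T ↦ (1/n) ∑ T_{jl} e_{j-l}` are positive
unital maps between `C(S¹)` and `𝒯_n`, and both are contractive for the Lipschitz seminorms
`‖[D, ·]‖`. Dually they give nonexpansive maps between `P(S¹)` and `S(𝒯_n)`, and it remains to see
that these are almost inverse to each other, for then the Gromov–Hausdorff distance is small.

* On `𝒯_n`, symbol followed by compression multiplies the `k`-th diagonal by `1 - |k| / n`. The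
  error matrix therefore has entries of modulus `|δ_n(T)_{jl}| / n`, and comparing the operator
  norm with the Frobenius norm bounds it by `‖δ_n(T)‖ / √n`.
* On `C(S¹)`, compression followed by symbol and evaluation at `x` is integration against a
  probability measure whose first Fourier coefficient is `(1 - 1/n) e_1(x)`. In the manner of
  Korovkin's theorem, this alone bounds its second moment about `x`: since
  `d(x, y)² ≤ (π² / 2) (1 - Re e_1(y - x))`, a `1`-Lipschitz function moves by at most `π / √(2n)`.

The second estimate also makes the Kantorovich distance a uniform limit of weak-* continuous
functions, whence the compactness of `P(S¹)`.
-/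

/-- The distance induced on `X` by observables `F i : X → E`, `i ∈ s`, namely the supremum of
`‖F i x - F i y‖`. Both distances of the theorem have this form. As for every real `sSup`, the
value is `0` when the observables do not stay at bounded distance. -/
noncomputable def observableDist {X ι E : Type*} [SeminormedAddCommGroup E]
    (s : Set ι) (F : ι → X → E) (x y : X) : ℝ :=
  sSup {r : ℝ | ∃ i ∈ s, r = ‖F i x - F i y‖}

section ObservableDist

variable {X ι E : Type*} {s : Set ι} {x y : X} {C : ℝ}

section Seminormed

variable [SeminormedAddCommGroup E] {F : ι → X → E}

lemma norm_sub_le_observableDist (hC : ∀ i ∈ s, ‖F i x - F i y‖ ≤ C) {i : ι} (hi : i ∈ s) :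
    ‖F i x - F i y‖ ≤ observableDist s F x y :=
  le_csSup ⟨C, by rintro _ ⟨j, hj, rfl⟩; exact hC j hj⟩ ⟨i, hi, rfl⟩

lemma observableDist_le (hC₀ : 0 ≤ C) (hC : ∀ i ∈ s, ‖F i x - F i y‖ ≤ C) :
    observableDist s F x y ≤ C :=
  Real.sSup_le (by rintro _ ⟨i, hi, rfl⟩; exact hC i hi) hC₀

lemma observableDist_nonneg : 0 ≤ observableDist s F x y :=
  Real.sSup_nonneg (by rintro _ ⟨i, -, rfl⟩; exact norm_nonneg _)

end Seminormed

/-- `observableDist s F` as a metric, for observables that stay at bounded distance and separate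
the points of `X`. -/
noncomputable abbrev observableMetricSpace [NormedAddCommGroup E] (s : Set ι) (F : ι → X → E)
    (C : X → X → ℝ) (hC : ∀ x y, ∀ i ∈ s, ‖F i x - F i y‖ ≤ C x y)
    (hsep : ∀ x y, (∀ i ∈ s, F i x = F i y) → x = y) : MetricSpace X where
  dist := observableDist s F
  dist_self x := le_antisymm (observableDist_le le_rfl (by simp)) observableDist_nonneg
  dist_comm x y := by simp only [observableDist, norm_sub_rev]
  dist_triangle x y z :=
    observableDist_le (add_nonneg observableDist_nonneg observableDist_nonneg) fun _ hi =>
      (norm_sub_le_norm_sub_add_norm_sub _ _ _).trans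
        (add_le_add (norm_sub_le_observableDist (hC x y) hi)
          (norm_sub_le_observableDist (hC y z) hi))
  eq_of_dist_eq_zero {x y} h := hsep x y fun _ hi => eq_of_sub_eq_zero <| norm_le_zero_iff.1 <|
    (norm_sub_le_observableDist (hC x y) hi).trans_eq h

end ObservableDist

lemma compactSpace_of_tendsto_dist {X : Type*} [TopologicalSpace X] [CompactSpace X]
    (m : MetricSpace X) (h : ∀ x₀, Tendsto (fun x => m.dist x x₀) (nhds x₀) (nhds 0)) :
    @CompactSpace X m.toUniformSpace.toTopologicalSpace :=
  have hcont : @Continuous X X _ m.toUniformSpace.toTopologicalSpace id :=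
    @continuous_iff_continuousAt X X _ m.toUniformSpace.toTopologicalSpace _ |>.2 fun x₀ =>
      @tendsto_iff_dist_tendsto_zero X X m.toPseudoMetricSpace _ _ _ |>.2 (h x₀)
  @Function.Surjective.compactSpace X X _ m.toUniformSpace.toTopologicalSpace id hcont
    _ Function.surjective_id

lemma ghDist_le_add_of_nonexpansive {X Y : Type*} [MetricSpace X] [Nonempty X] [CompactSpace X]
    [MetricSpace Y] [Nonempty Y] [CompactSpace Y] {A : Y → X} {B : X → Y} {a b : ℝ}
    (hA : LipschitzWith 1 A) (hB : LipschitzWith 1 B) (hAB : ∀ x, dist (A (B x)) x ≤ a)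
    (hBA : ∀ y, dist (B (A y)) y ≤ b) : GromovHausdorff.ghDist X Y ≤ a + b := by
  have hisom : ∀ x y : (Set.univ : Set X), |dist x y - dist (B x) (B y)| ≤ 2 * a := fun x y => by
    have hle := hB.dist_le_mul x y
    have hge := hA.dist_le_mul (B x) (B y)
    have htri := dist_triangle4 (x : X) (A (B x)) (A (B y)) y
    have hx := dist_comm (A (B x)) x ▸ hAB x
    have hy := hAB y
    rw [NNReal.coe_one, one_mul] at hle hge
    rw [Subtype.dist_eq, abs_of_nonneg (by linarith)]
    linarith
  have := GromovHausdorff.ghDist_le_of_approx_subsets (ε₁ := 0) (fun x : Set.univ => B x)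
    (fun x => ⟨x, Set.mem_univ x, (dist_self x).le⟩)
    (fun y => ⟨⟨A y, Set.mem_univ _⟩, dist_comm y (B (A y)) ▸ hBA y⟩) hisom
  linarith

section OperatorNorm

open scoped Matrix.Norms.L2Operator Matrix

variable {m n 𝕜 : Type*} [RCLike 𝕜] [Fintype m] [Fintype n] [DecidableEq n]

lemma sum_norm_sq_col_le_l2_opNorm_sq (M : Matrix m n 𝕜) (l : n) :
    ∑ j, ‖M j l‖ ^ 2 ≤ ‖M‖ ^ 2 := by
  have hcol := pow_le_pow_left₀ (norm_nonneg _)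
    (Matrix.l2_opNorm_mulVec M (EuclideanSpace.single l 1)) 2
  simpa [EuclideanSpace.norm_sq_eq] using hcol

lemma norm_apply_le_l2_opNorm (M : Matrix m n 𝕜) (j : m) (l : n) : ‖M j l‖ ≤ ‖M‖ :=
  le_of_sq_le_sq ((Finset.single_le_sum (f := fun j => ‖M j l‖ ^ 2) (fun _ _ => by positivity)
    (Finset.mem_univ j)).trans (sum_norm_sq_col_le_l2_opNorm_sq M l)) (norm_nonneg M)

lemma l2_opNorm_sq_le_sum_norm_sq (M : Matrix m n 𝕜) : ‖M‖ ^ 2 ≤ ∑ j, ∑ l, ‖M j l‖ ^ 2 := by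
  have hnonneg : 0 ≤ ∑ j, ∑ l, ‖M j l‖ ^ 2 := by positivity
  refine (Real.le_sqrt (norm_nonneg _) hnonneg).1 ?_
  rw [Matrix.l2_opNorm_def]
  refine ContinuousLinearMap.opNorm_le_bound _ (Real.sqrt_nonneg _) fun y => ?_
  refine le_of_sq_le_sq ?_ (by positivity)
  rw [mul_pow, Real.sq_sqrt hnonneg, Finset.sum_mul, EuclideanSpace.norm_sq_eq]
  refine Finset.sum_le_sum fun j _ => ?_
  calc ‖(M *ᵥ y) j‖ ^ 2 ≤ (∑ l, ‖M j l‖ * ‖y l‖) ^ 2 := by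
        gcongr
        exact (norm_sum_le _ _).trans_eq (by simp only [norm_mul])
    _ ≤ (∑ l, ‖M j l‖ ^ 2) * ‖y‖ ^ 2 := by
        rw [EuclideanSpace.norm_sq_eq]
        exact Finset.sum_mul_sq_le_sq_mul_sq _ _ _

lemma l2_opNorm_le_mul_sqrt_card {M N : Matrix m n 𝕜} {c : ℝ} (hc : 0 ≤ c)
    (h : ∀ j l, ‖M j l‖ ≤ c * ‖N j l‖) : ‖M‖ ≤ c * √(Fintype.card n) * ‖N‖ := by
  refine le_of_sq_le_sq ?_ (by positivity)
  calc ‖M‖ ^ 2 ≤ ∑ j, ∑ l, ‖M j l‖ ^ 2 := l2_opNorm_sq_le_sum_norm_sq M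
    _ ≤ ∑ j, ∑ l, (c * ‖N j l‖) ^ 2 := by gcongr; exact h _ _
    _ = c ^ 2 * ∑ l, ∑ j, ‖N j l‖ ^ 2 := by
        simp only [mul_pow, ← Finset.mul_sum]
        rw [Finset.sum_comm]
    _ ≤ c ^ 2 * ∑ _l : n, ‖N‖ ^ 2 := by
        gcongr
        exact sum_norm_sq_col_le_l2_opNorm_sq N _
    _ = (c * √(Fintype.card n) * ‖N‖) ^ 2 := by
        rw [Finset.sum_const, Finset.card_univ, nsmul_eq_mul, mul_pow, mul_pow,
          Real.sq_sqrt (Nat.cast_nonneg _), mul_assoc]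

end OperatorNorm

lemma norm_le_of_neg_algebraMap_le_of_le_algebraMap {A : Type*} [CStarAlgebra A] [PartialOrder A]
    [StarOrderedRing A] {a : A} {r : ℝ} (ha : IsSelfAdjoint a) (hr : 0 ≤ r)
    (hlower : -algebraMap ℝ A r ≤ a) (hupper : a ≤ algebraMap ℝ A r) : ‖a‖ ≤ r := by
  rw [← map_neg, algebraMap_le_iff_le_spectrum] at hlower
  rw [le_algebraMap_iff_spectrum_le] at hupper
  rw [← cfc_id ℝ a]
  exact norm_cfc_le hr fun x hx => abs_le.2 ⟨hlower x hx, hupper x hx⟩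

section OperatorSystem

variable {A : Type*} [CStarAlgebra A] [PartialOrder A] [StarOrderedRing A]
  {V : Submodule ℂ A} {φ : V →ₗ[ℂ] ℂ}

lemma state_apply_le_norm {e : V} (he : (e : A) = 1) (hpos : ∀ a : V, 0 ≤ (a : A) → 0 ≤ φ a)
    (hunit : φ e = 1) {a : V} (ha : IsSelfAdjoint (a : A)) : φ a ≤ ‖a‖ := by
  have hnonneg : 0 ≤ (((‖a‖ : ℂ) • e - a : V) : A) := by
    have hle := ha.le_algebraMap_norm_self
    rw [Algebra.algebraMap_eq_smul_one] at hle
    simpa [he] using hle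
  simpa [hunit] using hpos _ hnonneg

lemma state_apply_star {e : V} (he : (e : A) = 1) (hpos : ∀ a : V, 0 ≤ (a : A) → 0 ≤ φ a)
    (hunit : φ e = 1) {a b : V} (hab : (b : A) = star (a : A)) :
    φ b = starRingEnd ℂ (φ a) := by
  have hreal : ∀ h : V, IsSelfAdjoint (h : A) → (φ h).im = 0 := fun h hh =>
    (Complex.le_def.1 (state_apply_le_norm he hpos hunit hh)).2
  have hadd := hreal (a + b) (by simp [hab])
  have hsub := hreal (Complex.I • (a - b)) <| by
    rw [isSelfAdjoint_iff]
    simp only [SetLike.val_smul, AddSubgroupClass.coe_sub, hab, star_smul, star_sub, star_star,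
      RCLike.star_def, Complex.conj_I, neg_smul, ← smul_neg, neg_sub]
  simp only [map_add, map_smul, map_sub, Complex.add_im, smul_eq_mul, Complex.mul_im,
    Complex.I_re, Complex.I_im, Complex.sub_re] at hadd hsub
  apply Complex.ext <;> simp <;> linarith

lemma norm_state_apply_le {e : V} (he : (e : A) = 1) (hstar : ∀ a ∈ V, star a ∈ V)
    (hpos : ∀ a : V, 0 ≤ (a : A) → 0 ≤ φ a) (hunit : φ e = 1) (a : V) : ‖φ a‖ ≤ ‖a‖ := by
  obtain ⟨c, hc, hphase⟩ : ∃ c : ℂ, ‖c‖ = 1 ∧ (‖φ a‖ : ℂ) = c * φ a :=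
    RCLike.exists_norm_eq_mul_self (φ a)
  let b : V := ⟨star ((c • a : V) : A), hstar _ (c • a).2⟩
  have hsum : φ (c • a + b) = ((2 * ‖φ a‖ : ℝ) : ℂ) := by
    rw [map_add, state_apply_star he hpos hunit (b := b) rfl, map_smul, smul_eq_mul, ← hphase,
      Complex.conj_ofReal, Complex.ofReal_mul, Complex.ofReal_ofNat, two_mul]
  have hsum_le : 2 * ‖φ a‖ ≤ ‖c • a + b‖ := Complex.real_le_real.1 <|
    hsum ▸ state_apply_le_norm he hpos hunit (IsSelfAdjoint.add_star_self ((c • a : V) : A))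
  have hb : ‖b‖ = ‖c • a‖ := norm_star ((c • a : V) : A)
  have hnorm : ‖c • a‖ = ‖a‖ := by rw [norm_smul, hc, one_mul]
  linarith [norm_add_le (c • a) b]

end OperatorSystem

open scoped Matrix.Norms.L2Operator MatrixOrder

section ToeplitzMatrices

variable {n : ℕ}

/-- The Toeplitz matrix with entries `c (j - l)`, as a linear function of its symbol sequence `c`.
Only the values of `c` on `(-n, n)` matter. -/
noncomputable def toeplitzOfSymbol (n : ℕ) : (ℤ → ℂ) →ₗ[ℂ] toeplitzSubmodule n where
  toFun c := ⟨Matrix.of fun j l => c (j - l), fun _ _ _ _ h => congrArg c h⟩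
  map_add' _ _ := rfl
  map_smul' _ _ := rfl

/-- The `k`-th power of the shift compressed to `𝒯_n`: the Toeplitz matrix whose symbol sequence
is the indicator of `k`. -/
noncomputable def toeplitzShift (n : ℕ) (k : ℤ) : toeplitzSubmodule n :=
  toeplitzOfSymbol n (Pi.single k 1)

lemma toeplitzOfSymbol_apply (c : ℤ → ℂ) (j l : Fin n) :
    (toeplitzOfSymbol n c : Matrix (Fin n) (Fin n) ℂ) j l = c (j - l) := rfl

lemma toeplitzOfSymbol_surjective : Function.Surjective (toeplitzOfSymbol n) := fun T => by
  refine ⟨Function.extend (fun p : Fin n × Fin n => (p.1 : ℤ) - p.2) (fun p => T.1 p.1 p.2) 0, ?_⟩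
  ext j l
  exact Function.FactorsThrough.extend_apply (fun _ _ h => T.2 _ _ _ _ h) 0 (j, l)

lemma toeplitzOfSymbol_congr {c d : ℤ → ℂ} (h : ∀ k ∈ Finset.Ioo (-(n : ℤ)) n, c k = d k) :
    toeplitzOfSymbol n c = toeplitzOfSymbol n d := by
  ext j l
  exact h _ (Finset.mem_Ioo.2 (by omega))

lemma toeplitzOfSymbol_eq_sum (c : ℤ → ℂ) :
    toeplitzOfSymbol n c = ∑ k ∈ Finset.Ioo (-(n : ℤ)) n, c k • toeplitzShift n k := by
  simp only [toeplitzShift, ← map_smul, ← map_sum]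
  refine toeplitzOfSymbol_congr fun k hk => ?_
  simp only [Finset.sum_apply, Pi.smul_apply, Pi.single_apply, smul_eq_mul, mul_ite, mul_one,
    mul_zero, Finset.sum_ite_eq, if_pos hk]

lemma toeplitzShift_zero : toeplitzShift n 0 = toeplitzOne n := by
  ext j l
  simp only [toeplitzShift, toeplitzOfSymbol_apply, toeplitzOne, Pi.single_apply,
    Matrix.one_apply, sub_eq_zero, Nat.cast_inj, Fin.val_inj]

lemma star_mem_toeplitzSubmodule {T : Matrix (Fin n) (Fin n) ℂ} (hT : T ∈ toeplitzSubmodule n) :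
    star T ∈ toeplitzSubmodule n := fun j l j' l' h =>
  congrArg star (hT l j l' j' (by lia))

lemma deltaMat_mem_toeplitzSubmodule {T : Matrix (Fin n) (Fin n) ℂ}
    (hT : T ∈ toeplitzSubmodule n) : deltaMat n T ∈ toeplitzSubmodule n := fun j l j' l' h => by
  simp only [deltaMat, Matrix.of_apply, h, hT j l j' l' h]

lemma norm_symbol_le (c : ℤ → ℂ) {k : ℤ} (hk : k ∈ Finset.Ioo (-(n : ℤ)) n) :
    ‖c k‖ ≤ ‖toeplitzOfSymbol n c‖ := by
  rw [Finset.mem_Ioo] at hk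
  have hentry := norm_apply_le_l2_opNorm (toeplitzOfSymbol n c : Matrix (Fin n) (Fin n) ℂ)
    ⟨k.toNat, by lia⟩ ⟨(-k).toNat, by lia⟩
  rwa [toeplitzOfSymbol_apply, Int.toNat_sub_toNat_neg] at hentry

end ToeplitzMatrices

section ToeplitzStates

variable {n : ℕ}

lemma ToeplitzState.norm_apply_le (φ : ToeplitzState n) (T : toeplitzSubmodule n) :
    ‖φ.1 T‖ ≤ ‖T‖ :=
  norm_state_apply_le (e := toeplitzOne n) rfl (fun _ => star_mem_toeplitzSubmodule)
    (fun S hS => φ.2.2 S (Matrix.nonneg_iff_posSemidef.1 hS)) φ.2.1 T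

lemma norm_sub_le_sum_toeplitzShift (φ ψ : toeplitzSubmodule n →ₗ[ℂ] ℂ)
    (h : φ (toeplitzOne n) = ψ (toeplitzOne n)) {T : toeplitzSubmodule n}
    (hT : ‖deltaMat n T‖ ≤ 1) :
    ‖φ T - ψ T‖ ≤
      ∑ k ∈ Finset.Ioo (-(n : ℤ)) n, ‖φ (toeplitzShift n k) - ψ (toeplitzShift n k)‖ := by
  obtain ⟨c, rfl⟩ := toeplitzOfSymbol_surjective T
  have hdelta : ∀ k ∈ Finset.Ioo (-(n : ℤ)) n, ‖(k : ℂ) * c k‖ ≤ 1 := fun k hk =>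
    (norm_symbol_le (fun k : ℤ => (k : ℂ) * c k) hk).trans hT
  rw [← LinearMap.sub_apply, toeplitzOfSymbol_eq_sum, map_sum]
  refine (norm_sum_le _ _).trans (Finset.sum_le_sum fun k hk => ?_)
  rw [map_smul, LinearMap.sub_apply, smul_eq_mul, norm_mul]
  obtain rfl | hk₀ := eq_or_ne k 0
  · simp [toeplitzShift_zero, h]
  · refine mul_le_of_le_one_left (norm_nonneg _) ((hdelta k hk).trans' ?_)
    rw [norm_mul]
    refine le_mul_of_one_le_left (norm_nonneg _) ?_
    rw [Complex.norm_intCast]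
    exact_mod_cast Int.one_le_abs hk₀

lemma ToeplitzState.ext_of_delta {φ ψ : ToeplitzState n}
    (h : ∀ T : toeplitzSubmodule n, ‖deltaMat n T‖ ≤ 1 → φ.1 T = ψ.1 T) : φ = ψ := by
  refine Subtype.ext (LinearMap.ext fun T => ?_)
  obtain ⟨r, hr, hrT⟩ : ∃ r : ℝ, 0 < r ∧ r * ‖deltaMat n T‖ ≤ 1 :=
    ⟨(1 + ‖deltaMat n T‖)⁻¹, by positivity, by
      rw [inv_mul_le_one₀ (by positivity)]; linarith⟩
  have hscale : deltaMat n (((r : ℂ) • T : toeplitzSubmodule n)) = (r : ℂ) • deltaMat n T := by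
    ext j l
    simp [deltaMat, mul_left_comm]
  have heq := h ((r : ℂ) • T) (by
    rwa [hscale, norm_smul, Complex.norm_real, Real.norm_of_nonneg hr.le])
  rw [map_smul, map_smul] at heq
  exact smul_right_injective ℂ (Complex.ofReal_ne_zero.2 hr.ne') heq

/-- Connes' distance as a metric on the state space of `𝒯_n`. -/
noncomputable abbrev toeplitzStateMetricSpace (n : ℕ) : MetricSpace (ToeplitzState n) :=
  observableMetricSpace {T : toeplitzSubmodule n | ‖deltaMat n T‖ ≤ 1} (fun T φ => φ.1 T) _
    (fun φ ψ _ => norm_sub_le_sum_toeplitzShift φ.1 ψ.1 (φ.2.1.trans ψ.2.1.symm))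
    fun _ _ => ToeplitzState.ext_of_delta

lemma toeplitzStateDist_eq_observableDist (φ ψ : ToeplitzState n) : toeplitzStateDist n φ ψ =
    observableDist {T : toeplitzSubmodule n | ‖deltaMat n T‖ ≤ 1} (fun T φ => φ.1 T) φ ψ := rfl

lemma toeplitzStateDist_nonneg (φ ψ : ToeplitzState n) : 0 ≤ toeplitzStateDist n φ ψ :=
  toeplitzStateDist_eq_observableDist φ ψ ▸ observableDist_nonneg

lemma toeplitzStateDist_le {φ ψ : ToeplitzState n} {C : ℝ} (hC₀ : 0 ≤ C)
    (hC : ∀ T : toeplitzSubmodule n, ‖deltaMat n T‖ ≤ 1 → ‖φ.1 T - ψ.1 T‖ ≤ C) :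
    toeplitzStateDist n φ ψ ≤ C :=
  toeplitzStateDist_eq_observableDist φ ψ ▸ observableDist_le hC₀ hC

lemma norm_sub_le_toeplitzStateDist (φ ψ : ToeplitzState n) {T : toeplitzSubmodule n}
    (hT : ‖deltaMat n T‖ ≤ 1) : ‖φ.1 T - ψ.1 T‖ ≤ toeplitzStateDist n φ ψ :=
  (norm_sub_le_observableDist (s := {T : toeplitzSubmodule n | ‖deltaMat n T‖ ≤ 1})
    (F := fun T (φ : ToeplitzState n) => φ.1 T)
    (fun _ => norm_sub_le_sum_toeplitzShift φ.1 ψ.1 (φ.2.1.trans ψ.2.1.symm)) hT).trans_eq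
      (toeplitzStateDist_eq_observableDist φ ψ).symm

/-- The weak-* topology on the state space of `𝒯_n`. -/
noncomputable instance : TopologicalSpace (ToeplitzState n) :=
  .induced (fun φ T => φ.1 T) inferInstance

lemma ToeplitzState.isInducing_apply :
    Topology.IsInducing fun (φ : ToeplitzState n) (T : toeplitzSubmodule n) => φ.1 T := ⟨rfl⟩

lemma ToeplitzState.continuous_apply (T : toeplitzSubmodule n) :
    Continuous fun φ : ToeplitzState n => φ.1 T :=
  (_root_.continuous_apply T).comp isInducing_apply.continuous

instance : CompactSpace (ToeplitzState n) := by
  refine isCompact_univ_iff.1 (ToeplitzState.isInducing_apply.isCompact_iff.2 ?_)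
  have hrange : Set.range (fun (φ : ToeplitzState n) T => φ.1 T) =
      Set.range ((↑) : (toeplitzSubmodule n →ₗ[ℂ] ℂ) → toeplitzSubmodule n → ℂ) ∩
      {f | f (toeplitzOne n) = 1 ∧ ∀ T : toeplitzSubmodule n, T.1.PosSemidef → 0 ≤ f T} := by
    ext f
    constructor
    · rintro ⟨φ, rfl⟩
      exact ⟨⟨φ.1, rfl⟩, φ.2⟩
    · rintro ⟨⟨φ, rfl⟩, hφ⟩
      exact ⟨⟨φ, hφ⟩, rfl⟩
  have hclosed : IsClosed (Set.range fun (φ : ToeplitzState n) T => φ.1 T) := by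
    rw [hrange]
    refine (LinearMap.isClosed_range_coe _ _ _).inter
      ((isClosed_eq (continuous_apply _) continuous_const).and ?_)
    simp only [Set.ofPred_forall]
    exact isClosed_iInter fun T => isClosed_iInter fun _ =>
      isClosed_le continuous_const (continuous_apply T)
  rw [Set.image_univ]
  refine (isCompact_univ_pi fun T => isCompact_closedBall (0 : ℂ) ‖T‖).of_isClosed_subset hclosed ?_
  rintro _ ⟨φ, rfl⟩ T -
  exact mem_closedBall_zero_iff.2 (φ.norm_apply_le T)

lemma toeplitzStateDist_le_sum (φ ψ : ToeplitzState n) : toeplitzStateDist n φ ψ ≤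
    ∑ k ∈ Finset.Ioo (-(n : ℤ)) n, ‖φ.1 (toeplitzShift n k) - ψ.1 (toeplitzShift n k)‖ :=
  toeplitzStateDist_le (Finset.sum_nonneg fun _ _ => norm_nonneg _) fun _ =>
    norm_sub_le_sum_toeplitzShift φ.1 ψ.1 (φ.2.1.trans ψ.2.1.symm)

lemma tendsto_toeplitzStateDist (ψ : ToeplitzState n) :
    Tendsto (fun φ => toeplitzStateDist n φ ψ) (nhds ψ) (nhds 0) := by
  have hcont : Continuous fun φ : ToeplitzState n => ∑ k ∈ Finset.Ioo (-(n : ℤ)) n,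
      ‖φ.1 (toeplitzShift n k) - ψ.1 (toeplitzShift n k)‖ :=
    continuous_finsetSum _ fun k _ =>
      ((ToeplitzState.continuous_apply _).sub continuous_const).norm
  exact squeeze_zero (fun φ => toeplitzStateDist_nonneg φ ψ)
    (fun φ => toeplitzStateDist_le_sum φ ψ) (by simpa using hcont.tendsto ψ)

lemma compactSpace_toeplitzState (n : ℕ) : @CompactSpace (ToeplitzState n)
    (toeplitzStateMetricSpace n).toUniformSpace.toTopologicalSpace :=
  compactSpace_of_tendsto_dist _ tendsto_toeplitzStateDist

end ToeplitzStates

section Fourier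

variable {T : ℝ}

lemma fourier_apply_add (k : ℤ) (s t : AddCircle T) :
    fourier k (s + t) = fourier k s * fourier k t := by
  simp only [fourier_apply, smul_add, AddCircle.toCircle_add, Circle.coe_mul]

variable [Fact (0 < T)]

lemma fourierCoeff_star (f : AddCircle T → ℂ) (k : ℤ) :
    fourierCoeff (star f) k = star (fourierCoeff f (-k)) := by
  simp only [fourierCoeff, RCLike.star_def, ← integral_conj, smul_eq_mul, map_mul, ← fourier_neg,
    neg_neg, Pi.star_apply]

lemma fourierCoeff_comp_add_right (f : AddCircle T → ℂ) (s : AddCircle T) (k : ℤ) :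
    fourierCoeff (fun t => f (t + s)) k = fourier k s * fourierCoeff f k := by
  have hcancel : fourier k s * fourier (-k) s = 1 := by rw [← fourier_add, add_neg_cancel]; simp
  simp only [fourierCoeff]
  rw [← integral_const_mul, ← integral_add_right_eq_self (fun t => fourier k s * _) s]
  congr 1 with t
  rw [fourier_apply_add, smul_eq_mul, smul_eq_mul]
  linear_combination -(fourier (-k) t * f (t + s)) * hcancel

end Fourier

lemma hasDerivAt_fourier_two_pi (k : ℤ) (t : ℝ) :
    HasDerivAt (fun t : ℝ => fourier k (t : AddCircle (2 * Real.pi)))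
      (Complex.I * k * fourier k (t : AddCircle (2 * Real.pi))) t := by
  refine (hasDerivAt_fourier (2 * Real.pi) k t).congr_deriv ?_
  have : (Real.pi : ℂ) ≠ 0 := Complex.ofReal_ne_zero.2 Real.pi_ne_zero
  push_cast
  field_simp

lemma integrable_of_continuous {X E : Type*} [TopologicalSpace X] [CompactSpace X]
    [MeasurableSpace X] [OpensMeasurableSpace X] [NormedAddCommGroup E] {f : X → E}
    (hf : Continuous f) (μ : Measure X) [IsFiniteMeasureOnCompacts μ] : Integrable f μ :=
  hf.integrable_of_hasCompactSupport (.of_compactSpace f)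

local notation "𝕋" => AddCircle (2 * Real.pi)

section Compression

variable {n : ℕ}

/-- The compression `P_n f P_n` of multiplication by `f` to the span of the first `n` characters:
the Toeplitz matrix of the Fourier coefficients of `f`. -/
noncomputable def toeplitzCompression (n : ℕ) : C(𝕋, ℂ) →ₗ[ℂ] toeplitzSubmodule n where
  toFun f := toeplitzOfSymbol n (fourierCoeff f)
  map_add' f g := by
    rw [← map_add, ContinuousMap.coe_add, fourierCoeff.add
      (integrable_of_continuous f.continuous _) (integrable_of_continuous g.continuous _)]
  map_smul' c f := by
    rw [RingHom.id_apply, ← map_smul]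
    congr 1 with k
    exact fourierCoeff.const_smul f c k

lemma toeplitzCompression_apply (f : C(𝕋, ℂ)) :
    toeplitzCompression n f = toeplitzOfSymbol n (fourierCoeff f) := rfl

lemma toeplitzCompression_fourier (k : ℤ) :
    toeplitzCompression n (fourier k) = toeplitzShift n k := by
  rw [toeplitzCompression_apply, fourierCoeff_fourier, toeplitzShift]

lemma toeplitzCompression_one : toeplitzCompression n 1 = toeplitzOne n := by
  rw [← toeplitzShift_zero, ← toeplitzCompression_fourier]
  congr 1 with t
  simp

lemma toeplitzCompression_star (f : C(𝕋, ℂ)) :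
    (toeplitzCompression n (star f)).1 = star (toeplitzCompression n f).1 := by
  ext j l
  rw [Matrix.star_apply, toeplitzCompression_apply, toeplitzCompression_apply,
    toeplitzOfSymbol_apply, toeplitzOfSymbol_apply, ContinuousMap.coe_star, fourierCoeff_star,
    neg_sub]

/-- The trigonometric polynomial with coefficients `v`, the image of `v ∈ ℂⁿ` in `P_n L²(S¹)`. -/
noncomputable def trigPoly (v : Fin n → ℂ) (t : 𝕋) : ℂ := ∑ l : Fin n, v l * fourier l t

lemma star_dotProduct_toeplitzCompression_mulVec (f : C(𝕋, ℂ)) (v : Fin n → ℂ) :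
    star v ⬝ᵥ ((toeplitzCompression n f).1.mulVec v) =
      ∫ t, f t * (star (trigPoly v t) * trigPoly v t) ∂AddCircle.haarAddCircle := by
  have hexpand : ∀ t, f t * (star (trigPoly v t) * trigPoly v t) =
      ∑ j : Fin n, ∑ l : Fin n,
        star (v j) * ((fourier (-((j : ℤ) - (l : ℤ))) t • f t) * v l) := fun t => by
    rw [trigPoly, star_sum, Finset.sum_mul_sum, Finset.mul_sum]
    refine Finset.sum_congr rfl fun j _ => ?_
    rw [Finset.mul_sum]
    refine Finset.sum_congr rfl fun l _ => ?_
    rw [neg_sub, sub_eq_add_neg, fourier_add, fourier_neg, star_mul', smul_eq_mul,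
      starRingEnd_apply]
    ring
  have hint : ∀ j l : Fin n, Integrable (fun t : 𝕋 =>
      star (v j) * ((fourier (-((j : ℤ) - (l : ℤ))) t • f t) * v l)) AddCircle.haarAddCircle :=
    fun j l => integrable_of_continuous (by fun_prop) _
  simp only [hexpand]
  rw [integral_finsetSum _ fun j _ => integrable_finsetSum _ fun l _ => hint j l]
  refine Finset.sum_congr rfl fun j _ => ?_
  rw [integral_finsetSum _ fun l _ => hint j l, Matrix.mulVec, dotProduct, Finset.mul_sum]
  refine Finset.sum_congr rfl fun l _ => ?_
  rw [integral_const_mul, integral_mul_const]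
  rfl

lemma toeplitzCompression_nonneg {f : C(𝕋, ℂ)} (hf : 0 ≤ f) :
    0 ≤ (toeplitzCompression n f).1 := by
  refine Matrix.nonneg_iff_posSemidef.2 (.of_dotProduct_mulVec_nonneg ?_ fun v => ?_)
  · change star _ = _
    rw [← toeplitzCompression_star, (IsSelfAdjoint.of_nonneg hf).star_eq]
  · rw [star_dotProduct_toeplitzCompression_mulVec]
    exact integral_nonneg fun t => mul_nonneg (hf t) (star_mul_self_nonneg _)

lemma norm_toeplitzCompression_le {f : C(𝕋, ℂ)} (hf : IsSelfAdjoint f) :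
    ‖toeplitzCompression n f‖ ≤ ‖f‖ := by
  have hmap (r : ℝ) : (toeplitzCompression n (algebraMap ℝ _ r)).1 = algebraMap ℝ _ r := by
    rw [Algebra.algebraMap_eq_smul_one, Algebra.algebraMap_eq_smul_one, ← Complex.coe_smul,
      map_smul, toeplitzCompression_one]
    rfl
  have hmono {g h : C(𝕋, ℂ)} (hgh : g ≤ h) :
      (toeplitzCompression n g).1 ≤ (toeplitzCompression n h).1 := by
    rw [← sub_nonneg, ← Submodule.coe_sub, ← map_sub]
    exact toeplitzCompression_nonneg (sub_nonneg.2 hgh)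
  refine norm_le_of_neg_algebraMap_le_of_le_algebraMap (A := Matrix (Fin n) (Fin n) ℂ) ?_
    (norm_nonneg f) ?_ ?_
  · exact (toeplitzCompression_star f).symm.trans
      (congrArg (fun g => (toeplitzCompression n g).1) hf.star_eq)
  · rw [← map_neg, ← hmap, map_neg (algebraMap ℝ _)]
    exact hmono hf.neg_algebraMap_norm_le_self
  · rw [← hmap]
    exact hmono hf.le_algebraMap_norm_self

/-- The difference quotient `t ↦ (f (t + h) - f t) / h`, which is `0` for `h = 0`. -/
noncomputable def differenceQuotient (f : C(𝕋, ℂ)) (h : ℝ) : C(𝕋, ℂ) :=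
  (h⁻¹ : ℂ) • (f.comp (.addRight (h : 𝕋)) - f)

lemma norm_differenceQuotient_le {f : C(𝕋, ℂ)} (hf : LipschitzWith 1 f) (h : ℝ) :
    ‖differenceQuotient f h‖ ≤ 1 := by
  refine (ContinuousMap.norm_le _ zero_le_one).2 fun t => ?_
  have hdist : ‖f (t + h) - f t‖ ≤ |h| := by
    rw [← dist_eq_norm]
    refine (hf.dist_le_mul _ _).trans ?_
    rw [NNReal.coe_one, one_mul, dist_eq_norm, add_sub_cancel_left]
    exact QuotientAddGroup.norm_mk_le_norm
  calc ‖differenceQuotient f h t‖ = |h|⁻¹ * ‖f (t + h) - f t‖ := by simp [differenceQuotient]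
    _ ≤ |h|⁻¹ * |h| := by gcongr
    _ ≤ 1 := inv_mul_le_one

lemma isSelfAdjoint_differenceQuotient {f : C(𝕋, ℂ)} (hf : IsSelfAdjoint f) (h : ℝ) :
    IsSelfAdjoint (differenceQuotient f h) := by
  have hf' : ∀ t, starRingEnd ℂ (f t) = f t := fun t => DFunLike.congr_fun hf t
  ext t
  simp [differenceQuotient, hf']

lemma toeplitzCompression_differenceQuotient_apply (f : C(𝕋, ℂ)) (h : ℝ) (j l : Fin n) :
    (toeplitzCompression n (differenceQuotient f h)).1 j l =
      (h : ℂ)⁻¹ * (fourier (j - l) (h : 𝕋) - 1) * (toeplitzCompression n f).1 j l := by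
  have hshift := fourierCoeff_comp_add_right f (h : 𝕋) ((j : ℤ) - l)
  rw [differenceQuotient, map_smul, map_sub, mul_assoc, sub_one_mul]
  exact congrArg (fun z => (h : ℂ)⁻¹ * (z - fourierCoeff f ((j : ℤ) - l))) hshift

lemma tendsto_toeplitzCompression_differenceQuotient (f : C(𝕋, ℂ)) :
    Tendsto (fun h => (toeplitzCompression n (differenceQuotient f h)).1) (nhdsWithin 0 {0}ᶜ)
      (nhds (Complex.I • deltaMat n (toeplitzCompression n f))) := by
  refine tendsto_pi_nhds.2 fun j => tendsto_pi_nhds.2 fun l => ?_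
  have hderiv := hasDerivAt_iff_tendsto_slope.1 (hasDerivAt_fourier_two_pi ((j : ℤ) - l) 0)
  convert hderiv.mul_const ((toeplitzCompression n f).1 j l) using 2 with h
  · rw [toeplitzCompression_differenceQuotient_apply]
    simp [slope]
  · simp [deltaMat, mul_assoc]

lemma norm_deltaMat_toeplitzCompression_le {f : C(𝕋, ℂ)} (hf : IsSelfAdjoint f)
    (hlip : LipschitzWith 1 f) : ‖deltaMat n (toeplitzCompression n f)‖ ≤ 1 := by
  have hle := le_of_tendsto (tendsto_toeplitzCompression_differenceQuotient f).norm <|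
    .of_forall fun h =>
      (norm_toeplitzCompression_le (n := n) (isSelfAdjoint_differenceQuotient hf h)).trans
        (norm_differenceQuotient_le hlip h)
  rwa [norm_smul, Complex.norm_I, one_mul] at hle

end Compression

section FejerSymbol

variable {n : ℕ}

/-- The positive unital map `𝒯_n → C(S¹)`, `T ↦ (1/n) ∑_{j,l} T_{jl} e_{j-l}`. On compressions it
is convolution with the Fejér kernel. -/
noncomputable def fejerSymbol (n : ℕ) : toeplitzSubmodule n →ₗ[ℂ] C(𝕋, ℂ) where
  toFun T := (n : ℂ)⁻¹ • ∑ j : Fin n, ∑ l : Fin n, T.1 j l • fourier (j - l)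
  map_add' S T := by
    simp only [Submodule.coe_add, Matrix.add_apply, add_smul, Finset.sum_add_distrib, smul_add]
  map_smul' c T := by
    simp only [Submodule.coe_smul, Matrix.smul_apply, Finset.smul_sum, smul_assoc,
      RingHom.id_apply, smul_comm c]

lemma fejerSymbol_apply (T : toeplitzSubmodule n) (x : 𝕋) :
    fejerSymbol n T x = (n : ℂ)⁻¹ * ∑ j : Fin n, ∑ l : Fin n, T.1 j l * fourier (j - l) x := by
  simp [fejerSymbol]

lemma fejerSymbol_apply_eq_dotProduct (T : toeplitzSubmodule n) (x : 𝕋) :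
    fejerSymbol n T x = (n : ℂ)⁻¹ *
      (star (fun j : Fin n => fourier (-j : ℤ) x) ⬝ᵥ
        T.1.mulVec fun j : Fin n => fourier (-j : ℤ) x) := by
  rw [fejerSymbol_apply]
  congr 1
  refine Finset.sum_congr rfl fun j _ => ?_
  rw [Matrix.mulVec, dotProduct, Finset.mul_sum]
  refine Finset.sum_congr rfl fun l _ => ?_
  rw [sub_eq_add_neg, fourier_add, Pi.star_apply, RCLike.star_def, ← fourier_neg, neg_neg]
  ring

lemma fejerSymbol_nonneg {T : toeplitzSubmodule n} (hT : T.1.PosSemidef) :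
    0 ≤ fejerSymbol n T := fun x => by
  change 0 ≤ fejerSymbol n T x
  rw [fejerSymbol_apply_eq_dotProduct]
  exact mul_nonneg (by positivity) (hT.dotProduct_mulVec_nonneg _)

lemma card_filter_sub_eq {k : ℤ} (hk : |k| ≤ n) :
    (({p | (p.1 : ℤ) - p.2 = k} : Finset (Fin n × Fin n)).card : ℤ) = n - |k| := by
  rw [Finset.card_nbij (t := Finset.Ico (max 0 (-k)) (min n (n - k))) (fun p => (p.2 : ℤ)),
    Int.card_Ico]
  · obtain h | h := abs_cases k <;> omega
  · intro p hp
    simp only [Finset.coe_filter, Finset.mem_univ, true_and, Set.mem_ofPred_eq] at hp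
    simp only [Finset.coe_Ico, Set.mem_Ico]
    omega
  · intro p hp q hq hpq
    simp only [Finset.coe_filter, Finset.mem_univ, true_and, Set.mem_ofPred_eq] at hp hq hpq
    ext <;> omega
  · intro l hl
    simp only [Finset.coe_Ico, Set.mem_Ico] at hl
    refine ⟨⟨⟨(l + k).toNat, by omega⟩, ⟨l.toNat, by omega⟩⟩, ?_, ?_⟩
    · simp only [Finset.coe_filter, Finset.mem_univ, true_and, Set.mem_ofPred_eq]
      omega
    · exact Int.toNat_of_nonneg (by omega)

lemma fejerSymbol_toeplitzShift [NeZero n] {k : ℤ} (hk : |k| ≤ n) :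
    fejerSymbol n (toeplitzShift n k) = (1 - |k| / n : ℂ) • fourier k := by
  have hcard := congrArg (Int.cast (R := ℂ)) (card_filter_sub_eq hk)
  ext x
  have hterm (p : Fin n × Fin n) : (toeplitzShift n k).1 p.1 p.2 * fourier (p.1 - p.2) x =
      if (p.1 : ℤ) - p.2 = k then fourier k x else 0 := by
    rw [toeplitzShift, toeplitzOfSymbol_apply, Pi.single_apply, ite_mul, one_mul, zero_mul]
    exact ite_congr rfl (fun h => by rw [h]) fun _ => rfl
  rw [fejerSymbol_apply, ← Fintype.sum_prod_type', Finset.sum_congr rfl fun p _ => hterm p,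
    ← Finset.sum_filter, Finset.sum_const, nsmul_eq_mul]
  push_cast at hcard
  rw [hcard, ContinuousMap.smul_apply, smul_eq_mul]
  field_simp [NeZero.ne n]

lemma fejerSymbol_one [NeZero n] : fejerSymbol n (toeplitzOne n) = 1 := by
  rw [← toeplitzShift_zero, fejerSymbol_toeplitzShift (by simp)]
  ext
  simp

lemma toeplitzCompression_fejerSymbol [NeZero n] (c : ℤ → ℂ) :
    toeplitzCompression n (fejerSymbol n (toeplitzOfSymbol n c)) =
      toeplitzOfSymbol n fun k => (1 - |k| / n : ℂ) * c k := by
  rw [toeplitzOfSymbol_eq_sum c, toeplitzOfSymbol_eq_sum, map_sum, map_sum]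
  refine Finset.sum_congr rfl fun k hk => ?_
  rw [map_smul, map_smul, fejerSymbol_toeplitzShift (abs_lt.2 (Finset.mem_Ioo.1 hk)).le, map_smul,
    toeplitzCompression_fourier, smul_smul, mul_comm]

lemma hasDerivAt_fejerSymbol (T : toeplitzSubmodule n) (t : ℝ) :
    HasDerivAt (fun t : ℝ => fejerSymbol n T (t : 𝕋))
      (Complex.I * fejerSymbol n ⟨_, deltaMat_mem_toeplitzSubmodule T.2⟩ (t : 𝕋)) t := by
  have hsum : HasDerivAt
      (fun t : ℝ => ∑ j : Fin n, ∑ l : Fin n, T.1 j l * fourier (j - l) (t : 𝕋))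
      (∑ j : Fin n, ∑ l : Fin n,
        T.1 j l * (Complex.I * ((j - l : ℤ) : ℂ) * fourier (j - l) (t : 𝕋))) t :=
    .fun_sum fun j _ => .fun_sum fun l _ => (hasDerivAt_fourier_two_pi _ t).const_mul _
  simp only [fejerSymbol_apply]
  refine (hsum.const_mul _).congr_deriv ?_
  simp only [Finset.mul_sum, deltaMat, Matrix.of_apply]
  refine Finset.sum_congr rfl fun j _ => Finset.sum_congr rfl fun l _ => ?_
  ring

end FejerSymbol

lemma exists_coe_eq_abs_eq_norm {T : ℝ} (x : AddCircle T) :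
    ∃ t : ℝ, (t : AddCircle T) = x ∧ |t| = ‖x‖ := by
  obtain ⟨r, rfl⟩ := QuotientAddGroup.mk_surjective x
  refine ⟨r - round (T⁻¹ * r) * T, ?_, (AddCircle.norm_eq T).symm⟩
  rw [AddCircle.coe_sub, ← zsmul_eq_mul, AddCircle.coe_zsmul, AddCircle.coe_period, smul_zero,
    sub_zero]

section MeasureState

variable {n : ℕ} [NeZero n]

/-- The state `T ↦ ∫ (fejerSymbol n T) dμ` on `𝒯_n` defined by a probability measure `μ` on the
circle. -/
noncomputable def measureState (n : ℕ) [NeZero n] (μ : ProbabilityMeasure 𝕋) : ToeplitzState n :=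
  ⟨{ toFun := fun T => ∫ x, fejerSymbol n T x ∂(μ : Measure 𝕋)
     map_add' := fun S T => by
      simp only [map_add, ContinuousMap.add_apply]
      exact integral_add (integrable_of_continuous (map_continuous _) _)
        (integrable_of_continuous (map_continuous _) _)
     map_smul' := fun c T => by
      simp only [map_smul, ContinuousMap.smul_apply, RingHom.id_apply]
      exact integral_smul c _ },
    by simp [fejerSymbol_one],
    fun T hT => integral_nonneg (fejerSymbol_nonneg hT)⟩

lemma measureState_apply (μ : ProbabilityMeasure 𝕋) (T : toeplitzSubmodule n) :
    (measureState n μ).1 T = ∫ x, fejerSymbol n T x ∂(μ : Measure 𝕋) := rfl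

lemma measureState_diracProba_apply (x : 𝕋) (T : toeplitzSubmodule n) :
    (measureState n (diracProba x)).1 T = fejerSymbol n T x :=
  integral_dirac _ x

lemma norm_fejerSymbol_apply_le (T : toeplitzSubmodule n) (x : 𝕋) : ‖fejerSymbol n T x‖ ≤ ‖T‖ := by
  rw [← measureState_diracProba_apply]
  exact ToeplitzState.norm_apply_le _ T

lemma lipschitzWith_fejerSymbol {T : toeplitzSubmodule n} (hT : ‖deltaMat n T‖ ≤ 1) :
    LipschitzWith 1 (fejerSymbol n T) := by
  have hreal (s t : ℝ) : ‖fejerSymbol n T (t : 𝕋) - fejerSymbol n T (s : 𝕋)‖ ≤ 1 * ‖t - s‖ := by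
    refine convex_univ.norm_image_sub_le_of_norm_hasDerivWithin_le
      (fun r _ => (hasDerivAt_fejerSymbol T r).hasDerivWithinAt) (fun r _ => ?_)
      (Set.mem_univ s) (Set.mem_univ t)
    rw [norm_mul, Complex.norm_I, one_mul]
    exact (norm_fejerSymbol_apply_le _ _).trans hT
  refine LipschitzWith.of_dist_le_mul fun x y => ?_
  obtain ⟨s, rfl⟩ := QuotientAddGroup.mk_surjective y
  obtain ⟨h, hh, habs⟩ := exists_coe_eq_abs_eq_norm (x - (s : 𝕋))
  obtain rfl : ((s + h : ℝ) : 𝕋) = x := by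
    rw [AddCircle.coe_add, hh]
    exact add_sub_cancel _ _
  rw [dist_eq_norm, dist_eq_norm, AddCircle.coe_add, add_sub_cancel_left, hh, ← habs]
  simpa using hreal s (s + h)

end MeasureState

section Riesz

variable {X : Type*} [TopologicalSpace X] [CompactSpace X] [T2Space X] [MeasurableSpace X]
  [BorelSpace X]

lemma exists_probabilityMeasure_forall_integral_eq (Λ : C(X, ℝ) →ₚ[ℝ] ℝ) (hone : Λ 1 = 1) :
    ∃ μ : ProbabilityMeasure X, ∀ f : C(X, ℝ), ∫ x, f x ∂(μ : Measure X) = Λ f := by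
  let Λc : CompactlySupportedContinuousMap X ℝ →ₚ[ℝ] ℝ :=
    { toFun := fun f => Λ f.toContinuousMap
      map_add' := fun f g => map_add Λ f.toContinuousMap g.toContinuousMap
      map_smul' := fun c f => map_smul Λ c f.toContinuousMap
      monotone' := fun f g hfg => OrderHomClass.mono Λ hfg }
  have hint (f : C(X, ℝ)) : ∫ x, f x ∂(RealRMK.rieszMeasure Λc) = Λ f :=
    RealRMK.integral_rieszMeasure Λc ⟨f, .of_compactSpace f⟩
  have hprob : IsProbabilityMeasure (RealRMK.rieszMeasure Λc) := by
    have hmass := hint 1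
    simp only [ContinuousMap.one_apply, integral_const, smul_eq_mul, mul_one, hone] at hmass
    rwa [isProbabilityMeasure_iff_real]
  exact ⟨⟨_, hprob⟩, hint⟩

lemma exists_probabilityMeasure_forall_integral_eq_complex (Λ : C(X, ℂ) →ₚ[ℂ] ℂ)
    (hone : Λ 1 = 1) :
    ∃ μ : ProbabilityMeasure X, ∀ f : C(X, ℂ), ∫ x, f x ∂(μ : Measure X) = Λ f := by
  let Λre : C(X, ℝ) →ₚ[ℝ] ℝ :=
    { toFun := fun f => (Λ (f.realToRCLike ℂ)).re
      map_add' := fun f g => by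
        rw [← Complex.add_re, ← map_add]
        congr 3
        ext
        simp
      map_smul' := fun c f => by
        rw [RingHom.id_apply, ← Complex.smul_re, ← Λ.map_smul_of_tower]
        congr 3
        ext
        simp
      monotone' := fun f g hfg =>
        (Complex.le_def.1 (OrderHomClass.mono Λ (ContinuousMap.realToRCLike_monotone X ℂ hfg))).1 }
  have hre_one : Λre 1 = 1 := by
    have : (1 : C(X, ℝ)).realToRCLike ℂ = 1 := by
      ext
      simp
    exact congrArg Complex.re ((congrArg Λ this).trans hone)
  obtain ⟨μ, hμ⟩ := exists_probabilityMeasure_forall_integral_eq Λre hre_one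
  have hself {f : C(X, ℂ)} (hf : IsSelfAdjoint f) : ∫ x, f x ∂(μ : Measure X) = Λ f := by
    have hreal : (((Λ f).re : ℝ) : ℂ) = Λ f := Complex.conj_eq_iff_re.1 (hf.map Λ)
    have hlift := ContinuousMap.IsSelfAdjoint.realToRCLike_rclikeToReal hf
    rw [← hreal, ← hlift]
    exact integral_ofReal.trans (congrArg _ (hμ f.rclikeToReal))
  refine ⟨μ, fun f => ?_⟩
  rw [← realPart_add_I_smul_imaginaryPart f, map_add, map_smul, ← hself (realPart f).2,
    ← hself (imaginaryPart f).2, ← integral_smul, ← integral_add]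
  · rfl
  all_goals exact integrable_of_continuous (by fun_prop) _

end Riesz

section LipschitzIntegral

variable {X : Type*} [MeasurableSpace X]

section Compact

variable {E : Type*} [PseudoMetricSpace X] [CompactSpace X] [OpensMeasurableSpace X]
  [NormedAddCommGroup E] [NormedSpace ℝ E] [CompleteSpace E] {f : X → E} {K : NNReal}

lemma norm_integral_sub_apply_le (hf : LipschitzWith K f) (μ : Measure X)
    [IsProbabilityMeasure μ] (x : X) :
    ‖∫ y, f y ∂μ - f x‖ ≤ K * ∫ y, dist y x ∂μ := by
  have hmean : ∫ y, f y ∂μ - f x = ∫ y, (f y - f x) ∂μ := by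
    rw [integral_sub (integrable_of_continuous hf.continuous μ) (integrable_const _)]
    simp
  rw [hmean, ← integral_const_mul]
  exact norm_integral_le_of_norm_le (integrable_of_continuous (by fun_prop) μ)
    (.of_forall fun y => dist_eq_norm (f y) (f x) ▸ hf.dist_le_mul y x)

lemma norm_integral_sub_integral_le (hf : LipschitzWith K f) (μ ν : Measure X)
    [IsProbabilityMeasure μ] [IsProbabilityMeasure ν] (x : X) :
    ‖∫ y, f y ∂μ - ∫ y, f y ∂ν‖ ≤ K * ∫ y, dist y x ∂μ + K * ∫ y, dist y x ∂ν := by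
  refine (norm_sub_le_norm_sub_add_norm_sub _ (f x) _).trans
    (add_le_add (norm_integral_sub_apply_le hf μ x) ?_)
  rw [norm_sub_rev]
  exact norm_integral_sub_apply_le hf ν x

end Compact

lemma probabilityMeasure_ext_of_lipschitz [PseudoEMetricSpace X] [BorelSpace X]
    {μ ν : ProbabilityMeasure X}
    (h : ∀ f : X → ℝ, LipschitzWith 1 f →
      ∫ x, f x ∂(μ : Measure X) = ∫ x, f x ∂(ν : Measure X)) : μ = ν := by
  refine tendsto_nhds_unique (tendsto_const_nhds (f := (atTop : Filter ℕ)))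
    (tendsto_iff_forall_lipschitz_integral_tendsto.2 ?_)
  rintro f - ⟨L, hL⟩
  have hscaled : LipschitzWith 1 fun x => (L + 1)⁻¹ * f x := by
    refine ((lipschitzWith_smul (L + 1 : ℝ)⁻¹).comp hL).weaken ?_
    rw [nnnorm_inv, ← NNReal.coe_one, ← NNReal.coe_add, NNReal.nnnorm_eq]
    exact inv_mul_le_one_of_le₀ le_self_add zero_le
  have hint := h _ hscaled
  rw [integral_const_mul, integral_const_mul] at hint
  rw [mul_left_cancel₀ (by positivity) hint]
  exact tendsto_const_nhds

end LipschitzIntegral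

section Kantorovich

variable {μ ν : ProbabilityMeasure 𝕋}

lemma kantorovichDist_eq_observableDist (μ ν : ProbabilityMeasure 𝕋) : kantorovichDist μ ν =
    observableDist {f : 𝕋 → ℝ | LipschitzWith 1 f} (fun f μ => ∫ x, f x ∂(μ : Measure 𝕋)) μ ν :=
  rfl

/-- The Kantorovich distance as a metric on the Borel probability measures of the circle. It is
not an instance, since `ProbabilityMeasure` already carries the weak topology. -/
noncomputable abbrev kantorovichMetricSpace : MetricSpace (ProbabilityMeasure 𝕋) :=
  observableMetricSpace {f : 𝕋 → ℝ | LipschitzWith 1 f} (fun f μ => ∫ x, f x ∂(μ : Measure 𝕋))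
    _ (fun μ ν _ hf => norm_integral_sub_integral_le hf (μ : Measure 𝕋) ν 0)
    fun _ _ => probabilityMeasure_ext_of_lipschitz

lemma kantorovichDist_nonneg (μ ν : ProbabilityMeasure 𝕋) : 0 ≤ kantorovichDist μ ν :=
  kantorovichDist_eq_observableDist μ ν ▸ observableDist_nonneg

lemma kantorovichDist_le {C : ℝ} (hC₀ : 0 ≤ C)
    (hC : ∀ g : C(𝕋, ℂ), IsSelfAdjoint g → LipschitzWith 1 g →
      ‖∫ x, g x ∂(μ : Measure 𝕋) - ∫ x, g x ∂(ν : Measure 𝕋)‖ ≤ C) :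
    kantorovichDist μ ν ≤ C := by
  refine (kantorovichDist_eq_observableDist μ ν).trans_le (observableDist_le hC₀ fun f hf => ?_)
  have hf' : LipschitzWith 1 f := hf
  let f' : C(𝕋, ℝ) := ⟨f, hf'.continuous⟩
  have hint (ρ : ProbabilityMeasure 𝕋) :
      ∫ x, f'.realToRCLike ℂ x ∂(ρ : Measure 𝕋) = ∫ x, f x ∂(ρ : Measure 𝕋) := integral_ofReal
  have hle := hC (f'.realToRCLike ℂ) (f'.isSelfAdjoint_realToRCLike ℂ)
    (mul_one (1 : NNReal) ▸ Complex.isometry_ofReal.lipschitz.comp hf')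
  rwa [hint, hint, ← Complex.ofReal_sub, Complex.norm_real] at hle

lemma norm_integral_sub_le_kantorovichDist {g : 𝕋 → ℂ} (hg : LipschitzWith 1 g) :
    ‖∫ x, g x ∂(μ : Measure 𝕋) - ∫ x, g x ∂(ν : Measure 𝕋)‖ ≤ kantorovichDist μ ν := by
  obtain ⟨c, hc, hphase⟩ := RCLike.exists_norm_eq_mul_self
    (∫ x, g x ∂(μ : Measure 𝕋) - ∫ x, g x ∂(ν : Measure 𝕋))
  have hre : LipschitzWith 1 fun x => (c * g x).re := by
    refine LipschitzWith.of_dist_le_mul fun x y => ?_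
    rw [Real.dist_eq, ← Complex.sub_re, ← mul_sub]
    refine (Complex.abs_re_le_norm _).trans ?_
    rw [norm_mul, hc, one_mul, ← dist_eq_norm]
    exact hg.dist_le_mul x y
  have hint (ρ : ProbabilityMeasure 𝕋) :
      ∫ x, (c * g x).re ∂(ρ : Measure 𝕋) = (c * ∫ x, g x ∂(ρ : Measure 𝕋)).re := by
    rw [← integral_const_mul]
    exact integral_re (integrable_of_continuous (hg.continuous.const_mul c) _)
  have hle := norm_sub_le_observableDist (x := μ) (y := ν)
    (s := {f : 𝕋 → ℝ | LipschitzWith 1 f})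
    (F := fun (f : 𝕋 → ℝ) (μ : ProbabilityMeasure 𝕋) => ∫ x, f x ∂(μ : Measure 𝕋))
    (fun _ hf => norm_integral_sub_integral_le hf (μ : Measure 𝕋) ν 0) hre
  rw [hint, hint, ← Complex.sub_re, ← mul_sub, ← hphase] at hle
  rwa [RCLike.ofReal_eq_complex_ofReal, Complex.ofReal_re, norm_norm] at hle

end Kantorovich

section StateMeasure

variable {n : ℕ}

lemma exists_probabilityMeasure_forall_integral_eq_toeplitzCompression (φ : ToeplitzState n) :
    ∃ μ : ProbabilityMeasure 𝕋, ∀ f : C(𝕋, ℂ),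
      ∫ x, f x ∂(μ : Measure 𝕋) = φ.1 (toeplitzCompression n f) :=
  exists_probabilityMeasure_forall_integral_eq_complex
    (.mk₀ (φ.1 ∘ₗ toeplitzCompression n) fun _ hf =>
      φ.2.2 _ (Matrix.nonneg_iff_posSemidef.1 (toeplitzCompression_nonneg hf)))
    ((congrArg φ.1 toeplitzCompression_one).trans φ.2.1)

/-- The probability measure on the circle representing the pull-back `f ↦ φ (P_n f P_n)` of a
Toeplitz state `φ`. -/
noncomputable def stateMeasure (φ : ToeplitzState n) : ProbabilityMeasure 𝕋 :=
  (exists_probabilityMeasure_forall_integral_eq_toeplitzCompression φ).choose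

lemma integral_stateMeasure (φ : ToeplitzState n) (f : C(𝕋, ℂ)) :
    ∫ x, f x ∂(stateMeasure φ : Measure 𝕋) = φ.1 (toeplitzCompression n f) :=
  (exists_probabilityMeasure_forall_integral_eq_toeplitzCompression φ).choose_spec f

lemma kantorovichDist_stateMeasure_le (φ ψ : ToeplitzState n) :
    kantorovichDist (stateMeasure φ) (stateMeasure ψ) ≤ toeplitzStateDist n φ ψ :=
  kantorovichDist_le (toeplitzStateDist_nonneg φ ψ) fun g hg hlip => by
    rw [integral_stateMeasure, integral_stateMeasure]
    exact norm_sub_le_toeplitzStateDist φ ψ (norm_deltaMat_toeplitzCompression_le hg hlip)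

variable [NeZero n]

lemma toeplitzStateDist_measureState_le (μ ν : ProbabilityMeasure 𝕋) :
    toeplitzStateDist n (measureState n μ) (measureState n ν) ≤ kantorovichDist μ ν :=
  toeplitzStateDist_le (kantorovichDist_nonneg μ ν) fun _ hT =>
    norm_integral_sub_le_kantorovichDist (lipschitzWith_fejerSymbol hT)

lemma norm_toeplitzCompression_fejerSymbol_sub_le (T : toeplitzSubmodule n) :
    ‖toeplitzCompression n (fejerSymbol n T) - T‖ ≤ (√n)⁻¹ * ‖deltaMat n T‖ := by
  obtain ⟨c, rfl⟩ := toeplitzOfSymbol_surjective T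
  have hentry (j l : Fin n) :
      ‖(toeplitzOfSymbol n (fun k => (1 - |k| / n : ℂ) * c k) - toeplitzOfSymbol n c).1 j l‖ ≤
        (n : ℝ)⁻¹ * ‖deltaMat n (toeplitzOfSymbol n c) j l‖ := by
    rw [Submodule.coe_sub, Matrix.sub_apply, toeplitzOfSymbol_apply, toeplitzOfSymbol_apply,
      deltaMat, Matrix.of_apply, toeplitzOfSymbol_apply, ← sub_one_mul, sub_sub_cancel_left]
    rw [norm_mul, norm_neg, norm_div, Complex.norm_natCast, norm_mul, Complex.norm_intCast,
      Complex.norm_intCast, Int.cast_abs, abs_abs, div_eq_inv_mul, mul_assoc]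
  have hle := l2_opNorm_le_mul_sqrt_card (by positivity) hentry
  rwa [← toeplitzCompression_fejerSymbol, Fintype.card_fin, inv_mul_eq_div,
    Real.sqrt_div_self', one_div] at hle

lemma toeplitzStateDist_measureState_stateMeasure_le (φ : ToeplitzState n) :
    toeplitzStateDist n (measureState n (stateMeasure φ)) φ ≤ (√n)⁻¹ := by
  refine toeplitzStateDist_le (by positivity) fun T hT => ?_
  rw [measureState_apply, integral_stateMeasure, ← map_sub]
  calc ‖φ.1 (toeplitzCompression n (fejerSymbol n T) - T)‖
      ≤ ‖toeplitzCompression n (fejerSymbol n T) - T‖ := φ.norm_apply_le _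
    _ ≤ (√n)⁻¹ * ‖deltaMat n T‖ := norm_toeplitzCompression_fejerSymbol_sub_le T
    _ ≤ (√n)⁻¹ := mul_le_of_le_one_right (by positivity) hT

end StateMeasure

section Moments

lemma re_fourier_one_coe (t : ℝ) : (fourier 1 (t : 𝕋)).re = Real.cos t := by
  have : (Real.pi : ℂ) ≠ 0 := Complex.ofReal_ne_zero.2 Real.pi_ne_zero
  rw [fourier_coe_apply, ← Complex.exp_ofReal_mul_I_re]
  congr 2
  push_cast
  field_simp

lemma norm_sq_le_one_sub_re_fourier_one (x : 𝕋) :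
    ‖x‖ ^ 2 ≤ Real.pi ^ 2 / 2 * (1 - (fourier 1 x).re) := by
  obtain ⟨t, rfl, ht⟩ := exists_coe_eq_abs_eq_norm x
  have hπ : |t| ≤ Real.pi := by
    have := AddCircle.norm_le_half_period (2 * Real.pi) (x := (t : 𝕋)) (by positivity)
    rwa [← ht, abs_of_pos Real.two_pi_pos, mul_div_cancel_left₀ _ two_ne_zero] at this
  rw [← ht, sq_abs, re_fourier_one_coe, ← div_le_iff₀' (by positivity)]
  refine le_of_eq_of_le ?_ (le_sub_comm.1 (Real.cos_le_one_sub_mul_cos_sq hπ))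
  field_simp

lemma sq_integral_le_integral_sq {Ω : Type*} [MeasurableSpace Ω] {μ : Measure Ω}
    [IsProbabilityMeasure μ] {X : Ω → ℝ} (hX : MemLp X 2 μ) :
    (∫ ω, X ω ∂μ) ^ 2 ≤ ∫ ω, X ω ^ 2 ∂μ :=
  sub_nonneg.1 <| (ProbabilityTheory.variance_nonneg X μ).trans_eq
    (ProbabilityTheory.variance_eq_sub hX)

lemma sq_integral_dist_le (μ : Measure 𝕋) [IsProbabilityMeasure μ] (x : 𝕋) :
    (∫ y, dist y x ∂μ) ^ 2 ≤
      Real.pi ^ 2 / 2 * (1 - ((∫ y, fourier 1 y ∂μ) * fourier 1 (-x)).re) := by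
  have hcont : Continuous fun y => dist y x := by fun_prop
  have hint : Integrable (fun y => fourier 1 (y - x)) μ :=
    integrable_of_continuous (by fun_prop) μ
  have hre : ∫ y, (fourier 1 (y - x)).re ∂μ = (∫ y, fourier 1 (y - x) ∂μ).re := integral_re hint
  calc (∫ y, dist y x ∂μ) ^ 2
      ≤ ∫ y, dist y x ^ 2 ∂μ :=
        sq_integral_le_integral_sq (hcont.memLp_of_hasCompactSupport (.of_compactSpace _))
    _ ≤ ∫ y, Real.pi ^ 2 / 2 * (1 - (fourier 1 (y - x)).re) ∂μ := by
        refine integral_mono (integrable_of_continuous (by fun_prop) μ)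
          (integrable_of_continuous (by fun_prop) μ) fun y => ?_
        simp only [dist_eq_norm]
        exact norm_sq_le_one_sub_re_fourier_one (y - x)
    _ = Real.pi ^ 2 / 2 * (1 - (∫ y, fourier 1 (y - x) ∂μ).re) := by
        rw [integral_const_mul, integral_sub (integrable_const _)
          (integrable_of_continuous (by fun_prop) μ), hre]
        simp
    _ = Real.pi ^ 2 / 2 * (1 - ((∫ y, fourier 1 y ∂μ) * fourier 1 (-x)).re) := by
        simp only [sub_eq_add_neg, fourier_apply_add, integral_mul_const]

end Moments

section RoundTrip

variable {n : ℕ} [NeZero n]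

lemma integral_fourier_one_stateMeasure_diracProba (x : 𝕋) :
    ∫ y, fourier 1 y ∂(stateMeasure (measureState n (diracProba x)) : Measure 𝕋) =
      (1 - (n : ℂ)⁻¹) * fourier 1 x := by
  rw [integral_stateMeasure, toeplitzCompression_fourier, measureState_diracProba_apply,
    fejerSymbol_toeplitzShift (by exact_mod_cast NeZero.one_le)]
  simp

lemma integral_dist_stateMeasure_diracProba_le (x : 𝕋) :
    ∫ y, dist y x ∂(stateMeasure (measureState n (diracProba x)) : Measure 𝕋) ≤
      Real.pi / √2 * (√n)⁻¹ := by
  have hinv : fourier 1 x * fourier 1 (-x) = 1 := by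
    rw [← fourier_apply_add, add_neg_cancel, fourier_eval_zero]
  refine le_of_sq_le_sq ((sq_integral_dist_le _ x).trans_eq ?_) (by positivity)
  rw [integral_fourier_one_stateMeasure_diracProba, mul_assoc, hinv, mul_pow, div_pow, inv_pow,
    Real.sq_sqrt zero_le_two, Real.sq_sqrt n.cast_nonneg]
  simp

lemma norm_fejerSymbol_toeplitzCompression_sub_le {f : C(𝕋, ℂ)} (hf : LipschitzWith 1 f) (x : 𝕋) :
    ‖fejerSymbol n (toeplitzCompression n f) x - f x‖ ≤ Real.pi / √2 * (√n)⁻¹ := by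
  rw [← measureState_diracProba_apply, ← integral_stateMeasure]
  refine (norm_integral_sub_apply_le hf _ x).trans ?_
  rw [NNReal.coe_one, one_mul]
  exact integral_dist_stateMeasure_diracProba_le x

lemma kantorovichDist_stateMeasure_measureState_le (μ : ProbabilityMeasure 𝕋) :
    kantorovichDist (stateMeasure (measureState n μ)) μ ≤ Real.pi / √2 * (√n)⁻¹ := by
  refine kantorovichDist_le (by positivity) fun g _ hg => ?_
  rw [integral_stateMeasure, measureState_apply, ← integral_sub
    (integrable_of_continuous (map_continuous _) _) (integrable_of_continuous g.continuous _)]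
  simpa using norm_integral_le_of_norm_le_const (μ := (μ : Measure 𝕋))
    (.of_forall (norm_fejerSymbol_toeplitzCompression_sub_le (n := n) hg))

end RoundTrip

section Compactness

lemma kantorovichDist_le_add_toeplitzStateDist (n : ℕ) [NeZero n] (μ ν : ProbabilityMeasure 𝕋) :
    kantorovichDist μ ν ≤ 2 * (Real.pi / √2 * (√n)⁻¹) +
      toeplitzStateDist n (measureState n μ) (measureState n ν) := by
  let _ := kantorovichMetricSpace
  have hμ : dist _ μ ≤ _ := kantorovichDist_stateMeasure_measureState_le (n := n) μ
  have hν : dist _ ν ≤ _ := kantorovichDist_stateMeasure_measureState_le (n := n) ν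
  have hstate : dist (stateMeasure _) (stateMeasure _) ≤ _ :=
    kantorovichDist_stateMeasure_le (measureState n μ) (measureState n ν)
  rw [dist_comm] at hμ
  calc dist μ ν
      ≤ dist μ (stateMeasure (measureState n μ)) + dist (stateMeasure (measureState n μ))
          (stateMeasure (measureState n ν)) + dist (stateMeasure (measureState n ν)) ν :=
        dist_triangle4 _ _ _ _
    _ ≤ _ := by linarith

lemma continuous_measureState (n : ℕ) [NeZero n] : Continuous (measureState n) :=
  ToeplitzState.isInducing_apply.continuous_iff.2 <| continuous_pi fun T =>
    continuous_iff_continuousAt.2 fun _ =>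
      (ProbabilityMeasure.tendsto_iff_forall_integral_rclike_tendsto ℂ).1 tendsto_id
        (.mkOfCompact (fejerSymbol n T))

lemma tendsto_inv_sqrt_natCast_add_one :
    Tendsto (fun n : ℕ => (√(n + 1 : ℕ))⁻¹) atTop (nhds 0) :=
  (Real.tendsto_sqrt_atTop.comp <|
    tendsto_natCast_atTop_atTop.comp (tendsto_add_atTop_nat 1)).inv_tendsto_atTop

lemma tendsto_kantorovichDist (ν : ProbabilityMeasure 𝕋) :
    Tendsto (fun μ => kantorovichDist μ ν) (nhds ν) (nhds 0) := by
  refine tendsto_order.2 ⟨fun a ha => .of_forall fun μ => ha.trans_le (kantorovichDist_nonneg μ ν),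
    fun ε hε => ?_⟩
  have herror : Tendsto (fun n : ℕ => 2 * (Real.pi / √2 * (√(n + 1 : ℕ))⁻¹)) atTop (nhds 0) := by
    simpa using (tendsto_inv_sqrt_natCast_add_one.const_mul (Real.pi / √2)).const_mul 2
  obtain ⟨n, hn⟩ := (herror.eventually_lt_const (half_pos hε)).exists
  have hstate := (tendsto_toeplitzStateDist (measureState (n + 1) ν)).comp
    ((continuous_measureState (n + 1)).tendsto ν)
  filter_upwards [hstate.eventually_lt_const (half_pos hε)] with μ hμ
  have := kantorovichDist_le_add_toeplitzStateDist (n + 1) μ ν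
  exact this.trans_lt (add_halves ε ▸ add_lt_add hn hμ)

lemma compactSpace_kantorovich : @CompactSpace (ProbabilityMeasure 𝕋)
    kantorovichMetricSpace.toUniformSpace.toTopologicalSpace :=
  compactSpace_of_tendsto_dist _ tendsto_kantorovichDist

end Compactness

lemma ghDist_toeplitzState_probabilityMeasure_le (n : ℕ) [NeZero n]
    (hT : Nonempty (ToeplitzState n)) (hP : Nonempty (ProbabilityMeasure 𝕋)) :
    @GromovHausdorff.ghDist (ToeplitzState n) (ProbabilityMeasure 𝕋) (toeplitzStateMetricSpace n)
      hT (compactSpace_toeplitzState n) kantorovichMetricSpace hP compactSpace_kantorovich ≤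
      (1 + Real.pi / √2) * (√n)⁻¹ := by
  let _ := toeplitzStateMetricSpace n
  let _ := kantorovichMetricSpace
  have := compactSpace_toeplitzState n
  have := compactSpace_kantorovich
  have hA : LipschitzWith 1 (measureState n) := .mk_one toeplitzStateDist_measureState_le
  have hB : LipschitzWith 1 (stateMeasure (n := n)) := .mk_one kantorovichDist_stateMeasure_le
  rw [add_mul, one_mul]
  exact ghDist_le_add_of_nonexpansive hA hB toeplitzStateDist_measureState_stateMeasure_le
    kantorovichDist_stateMeasure_measureState_le

/-- Proposition 3.6: each state space `(S(𝒯_n), d_n)` (for `n ≥ 1`) is a nonempty compact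
metric space, the probability measures `(P(S¹), d)` with the Kantorovich distance form a
nonempty compact metric space, and `(S(𝒯_n), d_n) → (P(S¹), d)` in Gromov–Hausdorff
distance as `n → ∞`. -/
theorem toeplitzStates_GH_converge :
    ∃ (instT : ∀ n : ℕ, MetricSpace (ToeplitzState (n + 1)))
      (instP : MetricSpace (ProbabilityMeasure (AddCircle (2 * Real.pi))))
      (hneT : ∀ n : ℕ, Nonempty (ToeplitzState (n + 1)))
      (hneP : Nonempty (ProbabilityMeasure (AddCircle (2 * Real.pi))))
      (hcT : ∀ n : ℕ, @CompactSpace (ToeplitzState (n + 1))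
        (instT n).toUniformSpace.toTopologicalSpace)
      (hcP : @CompactSpace (ProbabilityMeasure (AddCircle (2 * Real.pi)))
        instP.toUniformSpace.toTopologicalSpace),
      (∀ (n : ℕ) (φ ψ : ToeplitzState (n + 1)),
        @dist _ (instT n).toDist φ ψ = toeplitzStateDist (n + 1) φ ψ) ∧
      (∀ μ ν : ProbabilityMeasure (AddCircle (2 * Real.pi)),
        @dist _ instP.toDist μ ν = kantorovichDist μ ν) ∧
      Tendsto (fun n : ℕ =>
          @GromovHausdorff.ghDist (ToeplitzState (n + 1))
            (ProbabilityMeasure (AddCircle (2 * Real.pi)))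
            (instT n) (hneT n) (hcT n) instP hneP hcP)
        atTop (nhds 0) := by
  have hP : Nonempty (ProbabilityMeasure (AddCircle (2 * Real.pi))) := ⟨diracProba 0⟩
  have hT (n : ℕ) : Nonempty (ToeplitzState (n + 1)) := hP.map (measureState (n + 1))
  refine ⟨fun n => toeplitzStateMetricSpace (n + 1), kantorovichMetricSpace, hT, hP,
    fun n => compactSpace_toeplitzState (n + 1), compactSpace_kantorovich,
    fun _ _ _ => rfl, fun _ _ => rfl, ?_⟩
  refine squeeze_zero (fun n => dist_nonneg)
    (fun n => ghDist_toeplitzState_probabilityMeasure_le (n + 1) (hT n) hP) ?_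
  simpa using tendsto_inv_sqrt_natCast_add_one.const_mul (1 + Real.pi / √2)
end
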